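/- arXiv:1907.04636 — 2 statements merged into one kernel-verified Lean document; each statement's English description precedes it below -/
import Mathlib

section
/- Assume condition (R) and let α∈[0,1). Let ς_{γ,σ,1}(q) be the smallest positive zero of h_{γ,σ}'(·;q). Then the equation 1 + r·h_{γ,σ}''(r;q)/h_{γ,σ}'(r;q) = α has a unique root r₃ in the interval (0, ς_{γ,σ,1}(q)), and the radius of convexity of order α of h_{γ,σ}(·;q) equals r₃. -/
noncomputable def qPochInf (a q : ℝ) : ℝ := ∏' k : ℕ, (1 - a * q ^ k)

noncomputable def qGamma (q x : ℝ) : ℝ :=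
  qPochInf q q * (1 - q) ^ (1 - x) / qPochInf (q ^ x) q

noncomputable def qML (γ σ q : ℝ) (z : ℂ) : ℂ :=
  ∑' n : ℕ,
    (((-1) ^ n * σ ^ (2 * n) * q ^ (n * (n - 1)) / qGamma q (2 * n + γ + 1) : ℝ) : ℂ) * z ^ (2 * n)

noncomputable def qMLR (γ σ q : ℝ) (x : ℝ) : ℝ :=
  ∑' n : ℕ,
    ((-1) ^ n * σ ^ (2 * n) * q ^ (n * (n - 1)) / qGamma q (2 * n + γ + 1)) * x ^ (2 * n)

def condR (q γ : ℝ) : Prop :=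
  (γ = 0 ∨ γ = 1) ∨
    (γ ∈ Set.Ioo (0 : ℝ) 2 ∧ γ ≠ 1 ∧
      1 < q⁻¹ * (1 - q) * (1 - q ^ (γ + 1)) * (1 - q ^ (γ + 2)))

noncomputable def radiusStarlike (α : ℝ) (f : ℂ → ℂ) : ℝ :=
  sSup {r : ℝ | 0 < r ∧ ∀ z : ℂ, 0 < ‖z‖ → ‖z‖ < r →
    α < (z * deriv f z / f z).re}

noncomputable def radiusConvex (α : ℝ) (f : ℂ → ℂ) : ℝ :=
  sSup {r : ℝ | 0 < r ∧ ∀ z : ℂ, ‖z‖ < r →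
    α < (1 + z * deriv (deriv f) z / deriv f z).re}

noncomputable def fML (γ σ q : ℝ) (z : ℂ) : ℂ :=
  Complex.exp ((1 / ((γ : ℂ) + 1)) *
    Complex.log (z ^ ((γ : ℂ) + 1) * (qGamma q (γ + 1) : ℂ) * qML γ σ q z))

noncomputable def gML (γ σ q : ℝ) (z : ℂ) : ℂ :=
  z * (qGamma q (γ + 1) : ℂ) * qML γ σ q z

noncomputable def hML (γ σ q : ℝ) (z : ℂ) : ℂ :=
  z * (qGamma q (γ + 1) : ℂ) *
    ∑' n : ℕ,
      (((-1) ^ n * σ ^ (2 * n) * q ^ (n * (n - 1)) / qGamma q (2 * n + γ + 1) : ℝ) : ℂ) * z ^ n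

noncomputable def hMLR (γ σ q : ℝ) (x : ℝ) : ℝ :=
  x * qGamma q (γ + 1) *
    ∑' n : ℕ,
      ((-1) ^ n * σ ^ (2 * n) * q ^ (n * (n - 1)) / qGamma q (2 * n + γ + 1)) * x ^ n


section Helpers
open Filter Topology

lemma logderiv_poly (n : ℕ) : ∀ Q : Polynomial ℝ, Q.natDegree = n →
    (∀ z : ℂ, Polynomial.aeval z Q = 0 → ∃ x : ℝ, 0 < x ∧ z = x) →
    ∃ s : PowerSeries ℝ, (∀ k, 0 ≤ PowerSeries.coeff k s) ∧
      s * (Q : PowerSeries ℝ) = -(PowerSeries.X * (Polynomial.derivative Q : PowerSeries ℝ)) ∧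
      ∀ r : ℝ, 0 < r → (∀ x, 0 < x → x ≤ r → Q.eval x ≠ 0) →
        HasSum (fun k => PowerSeries.coeff k s * r ^ k)
          (-(r * (Polynomial.derivative Q).eval r) / Q.eval r) := by
  induction n with
  | zero =>
    intro Q hQ _
    refine ⟨0, by simp, ?_, ?_⟩
    · rw [Polynomial.derivative_of_natDegree_zero hQ]; simp
    · intro r _ _
      rw [Polynomial.derivative_of_natDegree_zero hQ]
      simp
  | succ n ih =>
    intro Q hQ hr
    have hQ0 : Q ≠ 0 := by rintro rfl; simp at hQ
    obtain ⟨z, hz⟩ := Complex.exists_root (f := Q.map (algebraMap ℝ ℂ))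
      (by rw [Polynomial.degree_map, Polynomial.degree_eq_natDegree hQ0, hQ]; exact_mod_cast Nat.succ_pos n)
    have hz' : Polynomial.aeval z Q = 0 := by
      rw [Polynomial.IsRoot.def, Polynomial.eval_map_algebraMap] at hz; exact hz
    obtain ⟨a, ha, rfl⟩ := hr z hz'
    have hroot : Q.eval a = 0 := by
      have h1 : Polynomial.aeval ((algebraMap ℝ ℂ) a) Q = 0 := hz'
      rw [Polynomial.aeval_algebraMap_apply] at h1
      simpa using h1
    obtain ⟨Q1, rfl⟩ := Polynomial.dvd_iff_isRoot.mpr hroot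
    have hQ1 : Q1 ≠ 0 := right_ne_zero_of_mul hQ0
    have hdeg : Q1.natDegree = n := by
      rw [Polynomial.natDegree_mul (Polynomial.X_sub_C_ne_zero a) hQ1, Polynomial.natDegree_X_sub_C] at hQ
      omega
    obtain ⟨s, hs0, hs1, hs2⟩ := ih Q1 hdeg (fun z hz => hr z (by simp [hz]))
    set e : PowerSeries ℝ := PowerSeries.mk (fun k => if k = 0 then 0 else a⁻¹ ^ k) with he
    have hee : e * (PowerSeries.X - PowerSeries.C a) = -PowerSeries.X := by
      ext k
      rw [mul_sub, map_sub, PowerSeries.coeff_mul_C]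
      rcases k with _ | k
      · simp [he]
      · rw [PowerSeries.coeff_succ_mul_X]
        rcases k with _ | k
        · simp [he, ha.ne']
        · simp only [he, PowerSeries.coeff_mk, map_neg, PowerSeries.coeff_X]
          simp
          field_simp
          ring
    refine ⟨s + e, ?_, ?_, ?_⟩
    · intro k
      rw [map_add]
      refine add_nonneg (hs0 k) ?_
      simp only [he, PowerSeries.coeff_mk]
      split_ifs <;> positivity
    · simp only [Polynomial.derivative_mul, Polynomial.derivative_sub, Polynomial.derivative_X,
        Polynomial.derivative_C, Polynomial.coe_mul, Polynomial.coe_add, Polynomial.coe_sub, Polynomial.coe_X,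
        Polynomial.coe_C, Polynomial.coe_one, Polynomial.coe_zero]
      linear_combination (PowerSeries.X - PowerSeries.C a) * hs1 + (Q1 : PowerSeries ℝ) * hee
    · intro r hr0 hx
      have har : r < a := by
        by_contra hcon
        exact hx a ha (not_lt.mp hcon) hroot
      have hQ1r : Q1.eval r ≠ 0 := by
        have := hx r hr0 le_rfl
        rw [Polynomial.eval_mul] at this
        exact right_ne_zero_of_mul this
      have h1 := hs2 r hr0 (fun x hx0 hxr => by
        have := hx x hx0 hxr
        rw [Polynomial.eval_mul] at this
        exact right_ne_zero_of_mul this)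
      have h2 : HasSum (fun k => PowerSeries.coeff k e * r ^ k) (r / (a - r)) := by
        have h3 := hasSum_geometric_of_lt_one (r := r / a) (by positivity) ((div_lt_one ha).mpr har)
        have h4 : HasSum (fun k : ℕ => if k = 0 then (1:ℝ) else 0) 1 := hasSum_ite_eq 0 1
        have h5 := h3.sub h4
        have har' : a - r ≠ 0 := by linarith
        have : r / (a - r) = (1 - r / a)⁻¹ - 1 := by
          have : 1 - r / a = (a - r)/a := by field_simp
          rw [this]; field_simp; ring
        rw [this]
        refine h5.congr_fun ?_ |> fun h => h
        intro k
        simp only [he, PowerSeries.coeff_mk]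
        split_ifs with hk
        · simp [hk]
        · rw [div_pow, inv_pow]; ring
      convert h1.add h2 using 1
      · ext k; rw [map_add]; ring
      · simp only [Polynomial.derivative_mul, Polynomial.derivative_sub, Polynomial.derivative_X,
          Polynomial.derivative_C, Polynomial.eval_mul, Polynomial.eval_add, Polynomial.eval_sub, Polynomial.eval_X,
          Polynomial.eval_C, Polynomial.eval_one, Polynomial.eval_zero]
        have har' : a - r ≠ 0 := by linarith
        have har'' : r - a ≠ 0 := by linarith
        field_simp
        ring

lemma poly_hasSum (Q : Polynomial ℝ) (x : ℝ) : HasSum (fun n => Q.coeff n * x ^ n) (Q.eval x) := by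
  rw [Polynomial.eval_eq_sum_range]
  apply hasSum_sum_of_ne_finset_zero
  intro b hb
  rw [Finset.mem_range, not_lt] at hb
  rw [Polynomial.coeff_eq_zero_of_natDegree_lt (by omega), zero_mul]

lemma poly_deriv_hasSum (Q : Polynomial ℝ) (x : ℝ) :
    HasSum (fun n : ℕ => (n : ℝ) * Q.coeff n * x ^ n) (x * (Polynomial.derivative Q).eval x) := by
  convert poly_hasSum (Polynomial.X * Polynomial.derivative Q) x using 1
  · ext n
    rcases n with _ | n
    · simp
    · rw [Polynomial.coeff_X_mul, Polynomial.coeff_derivative]; push_cast; ring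
  · simp

/-- nonnegativity of the Taylor coefficients of the negated logarithmic derivative. -/
lemma absA (g : ℕ → ℝ) (Q : ℕ → Polynomial ℝ) (hg0 : g 0 = 1)
    (hroot : ∀ K, ∀ z : ℂ, Polynomial.aeval z (Q K) = 0 → ∃ x : ℝ, 0 < x ∧ z = x)
    (hb : ∀ K n, |(Q K).coeff n| ≤ |g n|)
    (hlim : ∀ n, Tendsto (fun K => (Q K).coeff n) atTop (𝓝 (g n)))
    (hsum : ∀ r : ℝ, Summable (fun n => |g n| * r ^ n)) 
    (hsum' : ∀ r : ℝ, Summable (fun n : ℕ => (n : ℝ) * |g n| * r ^ n)) :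
    ∃ s : ℕ → ℝ, (∀ k, 0 ≤ s k) ∧
      (∀ n : ℕ, ∑ p ∈ Finset.HasAntidiagonal.antidiagonal n, s p.1 * g p.2 = -((n : ℝ) * g n)) ∧
      ∀ r : ℝ, 0 < r → (∀ x, 0 ≤ x → x ≤ r → 0 < ∑' n, g n * x ^ n) →
        Summable (fun k => s k * r ^ k) := by
  choose S hS0 hS1 hS2 using fun K => logderiv_poly _ (Q K) rfl (hroot K)
  have hSrec : ∀ (K n : ℕ), ∑ p ∈ Finset.HasAntidiagonal.antidiagonal n, PowerSeries.coeff p.1 (S K) * (Q K).coeff p.2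
      = -((n : ℝ) * (Q K).coeff n) := by
    intro K n
    have := congrArg (PowerSeries.coeff n) (hS1 K)
    rw [PowerSeries.coeff_mul] at this
    simp only [Polynomial.coeff_coe] at this
    rw [this]
    rcases n with _ | n
    · simp
    · rw [map_neg, PowerSeries.coeff_succ_X_mul, Polynomial.coeff_coe, Polynomial.coeff_derivative]
      push_cast; ring
  have hQ0 : ∀ K, (Q K).coeff 0 ≠ 0 := by
    intro K h
    obtain ⟨x, hx, h0⟩ := hroot K 0 (by
      rw [← Polynomial.coeff_zero_eq_aeval_zero' , h]; simp)
    have : x = 0 := by exact_mod_cast h0.symm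
    linarith
  set G : PowerSeries ℝ := PowerSeries.mk g with hG
  set D : PowerSeries ℝ := PowerSeries.mk (fun n => -((n : ℝ) * g n)) with hD
  set T : PowerSeries ℝ := D * G⁻¹ with hT
  have hTG : T * G = D := by
    rw [hT, mul_assoc, PowerSeries.inv_mul_cancel, mul_one]
    rw [← PowerSeries.coeff_zero_eq_constantCoeff_apply]; simp [hG, hg0]
  have hrec : ∀ n : ℕ, ∑ p ∈ Finset.HasAntidiagonal.antidiagonal n, PowerSeries.coeff p.1 T * g p.2
      = -((n : ℝ) * g n) := by
    intro n
    have := congrArg (PowerSeries.coeff n) hTG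
    rw [PowerSeries.coeff_mul] at this
    simpa [hG, hD] using this
  have hTlim : ∀ n, Tendsto (fun K => PowerSeries.coeff n (S K)) atTop (𝓝 (PowerSeries.coeff n T)) := by
    intro n
    induction n using Nat.strong_induction_on with
    | _ n ih =>
    have e1 : ∀ K, PowerSeries.coeff n (S K) = (-((n : ℝ) * (Q K).coeff n) -
        ∑ i ∈ Finset.range n, PowerSeries.coeff i (S K) * (Q K).coeff (n - i)) / (Q K).coeff 0 := by
      intro K
      have := hSrec K n
      rw [Finset.Nat.sum_antidiagonal_eq_sum_range_succ_mk, Finset.sum_range_succ] at this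
      rw [eq_div_iff (hQ0 K)]
      simp only [Nat.sub_self] at this
      linarith
    have e2 : PowerSeries.coeff n T = (-((n : ℝ) * g n) -
        ∑ i ∈ Finset.range n, PowerSeries.coeff i T * g (n - i)) / g 0 := by
      have := hrec n
      rw [Finset.Nat.sum_antidiagonal_eq_sum_range_succ_mk, Finset.sum_range_succ] at this
      rw [eq_div_iff (by simp [hg0])]
      simp only [Nat.sub_self] at this
      linarith
    rw [e2]
    simp_rw [e1]
    refine Tendsto.div ?_ (hlim 0) (by simp [hg0])
    refine Tendsto.sub ((tendsto_const_nhds.mul (hlim n)).neg) ?_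
    refine tendsto_finsetSum _ fun i hi => ?_
    exact (ih i (Finset.mem_range.mp hi)).mul (hlim _)
  refine ⟨fun k => PowerSeries.coeff k T, ?_, hrec, ?_⟩
  · intro k
    exact ge_of_tendsto' (hTlim k) (fun K => hS0 K k)
  · intro r hr hpos
    -- uniform positivity
    have hcont : ContinuousOn (fun x : ℝ => ∑' n, g n * x ^ n) (Set.Icc 0 r) := by
      refine continuousOn_tsum (u := fun n => |g n| * r ^ n) (fun n => by fun_prop) (hsum r) ?_
      intro n x hx
      rw [norm_mul, norm_pow, Real.norm_eq_abs, Real.norm_eq_abs, abs_of_nonneg hx.1]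
      exact mul_le_mul_of_nonneg_left (pow_le_pow_left₀ hx.1 hx.2 n) (abs_nonneg _)
    obtain ⟨x0, hx0, hmin⟩ := isCompact_Icc.exists_isMinOn (Set.nonempty_Icc.mpr hr.le) hcont
    set m := ∑' n, g n * x0 ^ n with hm
    have hmpos : 0 < m := hpos x0 hx0.1 hx0.2
    have hdiff : Tendsto (fun K => ∑' n, |(Q K).coeff n - g n| * r ^ n) atTop (𝓝 0) := by
      have : Tendsto (fun K => ∑' n, |(Q K).coeff n - g n| * r ^ n) atTop (𝓝 (∑' n : ℕ, (0:ℝ))) := by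
        refine tendsto_tsum_of_dominated_convergence (bound := fun n => 2 * (|g n| * r ^ n))
          ((hsum r).mul_left 2) ?_ ?_
        · intro n
          have := ((hlim n).sub_const (g n)).abs.mul_const (r ^ n)
          simpa using this
        · refine Eventually.of_forall fun K n => ?_
          rw [norm_mul, norm_pow, Real.norm_eq_abs, Real.norm_eq_abs, abs_abs, abs_of_pos hr, ← mul_assoc]
          gcongr
          calc |(Q K).coeff n - g n| ≤ |(Q K).coeff n| + |g n| := abs_sub _ _
            _ ≤ 2 * |g n| := by linarith [hb K n]
      simpa using this
    have hgsum : ∀ x, Summable (fun n => g n * x ^ n) := fun x => by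
      apply Summable.of_norm
      have := hsum |x|
      simpa [abs_mul, abs_pow] using this
    have hev : ∀ᶠ K in atTop, ∀ x, 0 < x → x ≤ r → (Q K).eval x ≠ 0 := by
      filter_upwards [hdiff.eventually (gt_mem_nhds hmpos)] with K hK x hx hxr h0
      have h1 : HasSum (fun n => ((Q K).coeff n - g n) * x ^ n) ((Q K).eval x - ∑' n, g n * x ^ n) := by
        have := (poly_hasSum (Q K) x).sub (hgsum x).hasSum
        simpa only [sub_mul] using this
      have hs1 : Summable (fun n => |(Q K).coeff n - g n| * r ^ n) := by
        refine Summable.of_nonneg_of_le (fun n => by positivity) (fun n => ?_) ((hsum r).mul_left 2)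
        rw [← mul_assoc]
        gcongr
        calc |(Q K).coeff n - g n| ≤ |(Q K).coeff n| + |g n| := abs_sub _ _
            _ ≤ 2 * |g n| := by linarith [hb K n]
      have h2 : ‖∑' n, ((Q K).coeff n - g n) * x ^ n‖ ≤ ∑' n, |(Q K).coeff n - g n| * r ^ n := by
        refine tsum_of_norm_bounded hs1.hasSum (fun n => ?_)
        rw [norm_mul, norm_pow, Real.norm_eq_abs, Real.norm_eq_abs, abs_of_pos hx]
        gcongr
      rw [h1.tsum_eq, h0, zero_sub, norm_neg, Real.norm_eq_abs] at h2
      have h3 : m ≤ ∑' n, g n * x ^ n := hmin ⟨hx.le, hxr⟩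
      have := le_abs_self (∑' n, g n * x ^ n)
      linarith
    have hl1 : Tendsto (fun K => (Q K).eval r) atTop (𝓝 (∑' n, g n * r ^ n)) := by
      have : ∀ K, (Q K).eval r = ∑' n, (Q K).coeff n * r ^ n := fun K => (poly_hasSum (Q K) r).tsum_eq.symm
      simp_rw [this]
      refine tendsto_tsum_of_dominated_convergence (hsum r) (fun n => (hlim n).mul_const _) ?_
      refine Eventually.of_forall fun K n => ?_
      rw [norm_mul, norm_pow, Real.norm_eq_abs, Real.norm_eq_abs, abs_of_pos hr]
      exact mul_le_mul_of_nonneg_right (hb K n) (by positivity)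
    have hl2 : Tendsto (fun K => r * (Polynomial.derivative (Q K)).eval r) atTop
        (𝓝 (∑' n : ℕ, (n : ℝ) * g n * r ^ n)) := by
      have : ∀ K, r * (Polynomial.derivative (Q K)).eval r = ∑' n : ℕ, (n : ℝ) * (Q K).coeff n * r ^ n :=
        fun K => (poly_deriv_hasSum (Q K) r).tsum_eq.symm
      simp_rw [this]
      refine tendsto_tsum_of_dominated_convergence (hsum' r)
        (fun n => (tendsto_const_nhds.mul (hlim n)).mul_const _) ?_
      refine Eventually.of_forall fun K n => ?_
      rw [norm_mul, norm_mul, norm_pow, Real.norm_eq_abs, Real.norm_eq_abs, Real.norm_eq_abs,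
        abs_of_pos hr, Nat.abs_cast]
      exact mul_le_mul_of_nonneg_right (mul_le_mul_of_nonneg_left (hb K n) (by positivity))
        (by positivity)
    have hl3 := hl2.neg.div hl1 (hpos r hr.le le_rfl).ne'
    refine summable_of_sum_range_le (c := -(∑' n : ℕ, (n : ℝ) * g n * r ^ n) / ∑' n, g n * r ^ n) ?_ ?_
    · intro k
      exact mul_nonneg (ge_of_tendsto' (hTlim k) (fun K => hS0 K k)) (by positivity)
    · intro M
      refine le_of_tendsto_of_tendsto (tendsto_finsetSum (Finset.range M) 
        (fun i _ => (hTlim i).mul_const (r ^ i))) hl3 ?_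
      filter_upwards [hev] with K hK
      refine sum_le_hasSum _ (fun i _ => mul_nonneg (hS0 K i) (by positivity)) (hS2 K r hr hK)


lemma gauss_lucas_pos (P : Polynomial ℝ)
    (hr : ∀ z : ℂ, Polynomial.aeval z P = 0 → ∃ x : ℝ, 0 < x ∧ z = x) :
    ∀ z : ℂ, Polynomial.aeval z (Polynomial.derivative (Polynomial.X * P)) = 0 →
      ∃ x : ℝ, 0 < x ∧ z = x := by
  intro z hz
  have hP00 : P.coeff 0 ≠ 0 := by
    intro h
    obtain ⟨x, hx, h0⟩ := hr 0 (by
      rw [← Polynomial.coeff_zero_eq_aeval_zero' , h]; simp)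
    have : x = 0 := by exact_mod_cast h0.symm
    linarith
  have hP0 : P ≠ 0 := by rintro rfl; simp at hP00
  set R : Polynomial ℂ := (Polynomial.X * P).map (algebraMap ℝ ℂ) with hR
  have hdeg : 0 < R.degree := by
    rw [hR, Polynomial.degree_map, Polynomial.degree_mul, Polynomial.degree_X,
      Polynomial.degree_eq_natDegree hP0]
    norm_cast; omega
  have hdR : R.derivative ≠ 0 := by
    intro h
    have h1 : (R.derivative).coeff 0 = 0 := by rw [h]; simp
    rw [Polynomial.coeff_derivative, hR, Polynomial.coeff_map, Polynomial.coeff_X_mul] at h1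
    simp at h1
    exact hP00 h1
  have hmem : z ∈ R.derivative.rootSet ℂ := by
    rw [Polynomial.mem_rootSet]
    refine ⟨hdR, ?_⟩
    rw [hR, Polynomial.derivative_map, Polynomial.aeval_map_algebraMap]
    exact hz
  have h2 := Polynomial.rootSet_derivative_subset_convexHull_rootSet hdeg hmem
  have hconv : Convex ℝ {w : ℂ | 0 ≤ w.re ∧ w.im = 0} := by
    intro x hx y hy a b ha hb _
    simp only [Set.mem_ofPred_eq] at *
    simp [hx.2, hy.2]
    nlinarith [mul_nonneg ha hx.1, mul_nonneg hb hy.1]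
  have h3 : R.rootSet ℂ ⊆ {w : ℂ | 0 ≤ w.re ∧ w.im = 0} := by
    intro w hw
    rw [Polynomial.mem_rootSet, hR, Polynomial.aeval_map_algebraMap, map_mul, Polynomial.aeval_X] at hw
    rcases mul_eq_zero.mp hw.2 with h | h
    · simp [h]
    · obtain ⟨x, hx, rfl⟩ := hr w h
      simp [hx.le]
  have h4 := convexHull_min h3 hconv h2
  have hz0 : z = (z.re : ℂ) := by
    apply Complex.ext <;> simp [h4.2]
  refine ⟨z.re, ?_, hz0⟩
  rcases h4.1.lt_or_eq with h | h
  · exact h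
  · exfalso
    rw [← h] at hz0
    rw [hz0] at hz
    simp only [Complex.ofReal_zero] at hz
    rw [← Polynomial.coeff_zero_eq_aeval_zero', Polynomial.coeff_derivative, Polynomial.coeff_X_mul] at hz
    simp at hz
    exact hP00 hz

lemma summable_succ_mul {a : ℕ → ℝ} (ha : ∀ r : ℝ, Summable (fun n => |a n| * r ^ n)) (r : ℝ) :
    Summable (fun n : ℕ => ((n : ℝ) + 1) * |a n| * r ^ n) := by
  apply Summable.of_norm
  refine Summable.of_nonneg_of_le (fun n => norm_nonneg _) (fun n => ?_) (ha (2 * |r|))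
  rw [norm_mul, norm_mul, norm_pow, Real.norm_eq_abs, Real.norm_eq_abs, Real.norm_eq_abs, abs_abs,
    abs_of_nonneg (by positivity), mul_pow]
  have h : (n : ℝ) + 1 ≤ 2 ^ n := by exact_mod_cast Nat.lt_two_pow_self
  have h2 : 0 ≤ |a n| * |r| ^ n := by positivity
  nlinarith [mul_le_mul_of_nonneg_right h h2]

lemma ps_hasDerivAt {𝕜 : Type*} [RCLike 𝕜] (a : ℕ → ℝ)
    (ha : ∀ r : ℝ, Summable (fun n => |a n| * r ^ n)) (z : 𝕜) :
    HasDerivAt (fun w : 𝕜 => ∑' n, ((a n : ℝ) : 𝕜) * w ^ n)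
      (∑' n : ℕ, (((n + 1 : ℝ) * a (n + 1) : ℝ) : 𝕜) * z ^ n) z := by
  set R : ℝ := ‖z‖ + 1 with hR
  have hR0 : 0 < R := by positivity
  have hu : Summable (fun n : ℕ => |a n| * ((n : ℝ) * R ^ (n - 1))) := by
    rw [← summable_nat_add_iff 1]
    have := (summable_nat_add_iff 1).mpr (summable_succ_mul ha R)
    refine Summable.of_nonneg_of_le (fun n => by positivity) (fun n => ?_) (this.mul_left R⁻¹)
    simp only [Nat.add_sub_cancel]
    push_cast
    rw [pow_succ]
    have : 0 ≤ |a (n+1)| * R ^ n := by positivity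
    have e : R⁻¹ * (((n:ℝ) + 1 + 1) * |a (n + 1)| * (R ^ n * R)) = ((n:ℝ)+1+1) * (|a (n+1)| * R ^ n) := by
      field_simp
    rw [e]
    nlinarith
  have h := hasDerivAt_tsum_of_isPreconnected (𝕜 := 𝕜) (F := 𝕜)
    (g := fun n w => ((a n : ℝ) : 𝕜) * w ^ n)
    (g' := fun n w => ((a n : ℝ) : 𝕜) * ((n : 𝕜) * w ^ (n - 1)))
    (t := Metric.ball 0 R) (y₀ := z) (y := z) hu Metric.isOpen_ball
    (convex_ball (0:𝕜) R).isPreconnected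
    (fun n y _ => (hasDerivAt_pow n y).const_mul _) ?_ (by simp [hR]) ?_ (by simp [hR])
  · have e : (∑' n : ℕ, (((n + 1 : ℝ) * a (n + 1) : ℝ) : 𝕜) * z ^ n) =
        ∑' n : ℕ, ((a n : ℝ) : 𝕜) * ((n : 𝕜) * z ^ (n - 1)) := by
      rw [tsum_eq_zero_add' (f := fun n : ℕ => ((a n : ℝ) : 𝕜) * ((n : 𝕜) * z ^ (n - 1)))]
      · simp
        congr 1; ext n; ring
      simp only [Nat.add_sub_cancel]
      apply Summable.of_norm
      have := (summable_nat_add_iff 1).mpr hu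
      refine Summable.of_nonneg_of_le (fun n => norm_nonneg _) (fun n => ?_) this
      rw [norm_mul, norm_mul, norm_pow, RCLike.norm_ofReal, RCLike.norm_natCast]
      simp only [Nat.add_sub_cancel]
      gcongr
      simp [hR]
    rw [e]; exact h
  · intro n y hy
    rw [mem_ball_zero_iff] at hy
    rw [norm_mul, norm_mul, norm_pow, RCLike.norm_ofReal, RCLike.norm_natCast]
    gcongr
  · apply Summable.of_norm
    simpa [norm_mul, norm_pow] using ha ‖z‖

lemma h_deriv {𝕜 : Type*} [RCLike 𝕜] (a : ℕ → ℝ)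
    (ha : ∀ r : ℝ, Summable (fun n => |a n| * r ^ n)) :
    deriv (fun w : 𝕜 => w * ∑' n, ((a n : ℝ) : 𝕜) * w ^ n) =
      fun z => ∑' n : ℕ, (((n + 1 : ℝ) * a n : ℝ) : 𝕜) * z ^ n := by
  set b : ℕ → ℝ := fun n => Nat.casesOn n 0 a with hb
  have hbs : ∀ r : ℝ, Summable (fun n => |b n| * r ^ n) := by
    intro r
    rw [← summable_nat_add_iff 1]
    have := (ha r).mul_left r
    refine this.congr fun n => ?_
    simp [hb, pow_succ]; ring
  have e : (fun w : 𝕜 => w * ∑' n, ((a n : ℝ) : 𝕜) * w ^ n) = fun w : 𝕜 => ∑' n, ((b n : ℝ) : 𝕜) * w ^ n := by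
    ext w
    have hs : Summable (fun n => ((a n : ℝ) : 𝕜) * w ^ n) := by
      apply Summable.of_norm
      simpa [norm_mul, norm_pow] using ha ‖w‖
    rw [← hs.tsum_mul_left, tsum_eq_zero_add' (f := fun n => ((b n : ℝ) : 𝕜) * w ^ n)]
    · simp [hb, pow_succ]
      congr 1; ext n; ring
    · refine (hs.mul_left w).congr fun n => ?_
      simp [hb, pow_succ]; ring
  rw [e]
  ext z
  rw [(ps_hasDerivAt b hbs z).deriv]

lemma ps_mul_deriv {𝕜 : Type*} [RCLike 𝕜] (g : ℕ → ℝ)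
    (hg : ∀ r : ℝ, Summable (fun n => |g n| * r ^ n)) (z : 𝕜) :
    z * deriv (fun w : 𝕜 => ∑' n, ((g n : ℝ) : 𝕜) * w ^ n) z = 
      ∑' n : ℕ, (((n : ℝ) * g n : ℝ) : 𝕜) * z ^ n := by
  rw [(ps_hasDerivAt g hg z).deriv, ← tsum_mul_left]
  have hs : Summable (fun n : ℕ => (((n : ℝ) * g n : ℝ) : 𝕜) * z ^ n) := by
    apply Summable.of_norm
    refine Summable.of_nonneg_of_le (fun n => norm_nonneg _) (fun n => ?_) (summable_succ_mul hg ‖z‖)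
    rw [norm_mul, norm_pow, RCLike.norm_ofReal, abs_mul, Nat.abs_cast]
    gcongr; linarith
  rw [hs.tsum_eq_zero_add]
  simp [pow_succ]
  congr 1; ext n; ring

lemma cauchy_id {𝕜 : Type*} [RCLike 𝕜] (g s : ℕ → ℝ)
    (hg : ∀ r : ℝ, Summable (fun n => |g n| * r ^ n)) (hs0 : ∀ k, 0 ≤ s k)
    (hrec : ∀ n : ℕ, ∑ p ∈ Finset.HasAntidiagonal.antidiagonal n, s p.1 * g p.2 = -((n : ℝ) * g n))
    (z : 𝕜) (hs : Summable (fun k => s k * ‖z‖ ^ k)) :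
    (∑' k, ((s k : ℝ) : 𝕜) * z ^ k) * (∑' n, ((g n : ℝ) : 𝕜) * z ^ n) =
      -(z * deriv (fun w : 𝕜 => ∑' n, ((g n : ℝ) : 𝕜) * w ^ n) z) := by
  rw [ps_mul_deriv g hg z, tsum_mul_tsum_eq_tsum_sum_antidiagonal_of_summable_norm]
  · rw [← tsum_neg]
    congr 1; ext n
    have : ∀ p ∈ Finset.HasAntidiagonal.antidiagonal n, ((s p.1 : ℝ) : 𝕜) * z ^ p.1 * (((g p.2 : ℝ) : 𝕜) * z ^ p.2)
        = ((s p.1 * g p.2 : ℝ) : 𝕜) * z ^ n := by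
      intro p hp
      rw [← Finset.HasAntidiagonal.mem_antidiagonal.mp hp, pow_add]; push_cast; ring
    rw [Finset.sum_congr rfl this, ← Finset.sum_mul, ← neg_mul, ← RCLike.ofReal_neg, ← hrec n]
    push_cast; rfl
  · refine hs.congr fun k => ?_
    rw [norm_mul, norm_pow, RCLike.norm_ofReal, abs_of_nonneg (hs0 k)]
  · refine (hg ‖z‖).congr fun k => ?_
    rw [norm_mul, norm_pow, RCLike.norm_ofReal]

lemma absB (a : ℕ → ℝ) (P : ℕ → Polynomial ℝ) (ha0 : a 0 = 1) (ha1 : a 1 < 0)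
    (hroot : ∀ K, ∀ z : ℂ, Polynomial.aeval z (P K) = 0 → ∃ x : ℝ, 0 < x ∧ z = x)
    (hb : ∀ K n, |(P K).coeff n| ≤ |a n|)
    (hlim : ∀ n, Tendsto (fun K => (P K).coeff n) atTop (𝓝 (a n)))
    (hsum : ∀ r : ℝ, Summable (fun n => |a n| * r ^ n))
    (hR : ℝ → ℝ) (hhR : hR = fun x => x * ∑' n, a n * x ^ n)
    (hC : ℂ → ℂ) (hhC : hC = fun x => x * ∑' n, ((a n : ℝ) : ℂ) * x ^ n)
    (α : ℝ) (hα0 : 0 ≤ α) (hα1 : α < 1)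
    (ς1 : ℝ) (hς1 : IsLeast {x : ℝ | 0 < x ∧ deriv hR x = 0} ς1) :
    ∃ r₃ : ℝ,
      (r₃ ∈ Set.Ioo 0 ς1 ∧ 1 + r₃ * deriv (deriv hR) r₃ / deriv hR r₃ = α) ∧
      (∀ r : ℝ, r ∈ Set.Ioo 0 ς1 → 1 + r * deriv (deriv hR) r / deriv hR r = α → r = r₃) ∧
      sSup {r : ℝ | 0 < r ∧ ∀ z : ℂ, ‖z‖ < r →
        α < (1 + z * deriv (deriv hC) z / deriv hC z).re} = r₃ := by
  set g : ℕ → ℝ := fun n => (n + 1 : ℝ) * a n with hg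
  have habs : ∀ n, |g n| = (n + 1 : ℝ) * |a n| := fun n => by
    rw [hg]; simp only; rw [abs_mul, abs_of_nonneg (by positivity)]
  have hgs : ∀ r : ℝ, Summable (fun n => |g n| * r ^ n) := by
    intro r
    simp_rw [habs]
    exact summable_succ_mul hsum r
  have hgs' : ∀ r : ℝ, Summable (fun n : ℕ => (n : ℝ) * |g n| * r ^ n) := by
    intro r
    refine ((summable_succ_mul hgs r).sub (hgs r)).congr fun n => ?_
    ring
  have hdR : deriv hR = fun x => ∑' n, g n * x ^ n := by
    rw [hhR]; exact h_deriv (𝕜 := ℝ) a hsum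
  have hdC : deriv hC = fun x => ∑' n, ((g n : ℝ) : ℂ) * x ^ n := by
    rw [hhC]; exact h_deriv (𝕜 := ℂ) a hsum
  rw [hdR] at hς1
  rw [hdR, hdC]
  set G : ℝ → ℝ := fun x => ∑' n, g n * x ^ n with hG
  obtain ⟨s, hs0, hrec, hss⟩ := absA g (fun K => Polynomial.derivative (Polynomial.X * P K)) (by simp [hg, ha0])
    (fun K => gauss_lucas_pos _ (hroot K)) 
    (fun K n => by
      rw [Polynomial.coeff_derivative, Polynomial.coeff_X_mul, habs, abs_mul, mul_comm, 
        abs_of_nonneg (by positivity : (0:ℝ) ≤ (n:ℝ) + 1)]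
      exact mul_le_mul_of_nonneg_left (hb K n) (by positivity))
    (fun n => by
      simp only [Polynomial.coeff_derivative, Polynomial.coeff_X_mul]
      have := (hlim n).mul_const ((n : ℝ) + 1)
      simpa only [hg, mul_comm] using this) hgs hgs'
  have hGd : ∀ x, HasDerivAt G (deriv G x) x := fun x => 
    (ps_hasDerivAt (𝕜 := ℝ) g hgs x).differentiableAt.hasDerivAt
  have hGc : Continuous G := continuous_iff_continuousAt.mpr fun x => (hGd x).continuousAt
  have hG0 : G 0 = 1 := by
    simp only [hG]
    rw [tsum_eq_single 0]
    · simp [hg, ha0]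
    · intro n hn; simp [hn]
  have hςpos : 0 < ς1 := hς1.1.1
  have hGς : G ς1 = 0 := hς1.1.2
  have hGpos : ∀ x, 0 ≤ x → x < ς1 → 0 < G x := by
    intro x hx0 hx1
    by_contra hcon
    push Not at hcon
    obtain ⟨y, hy, hy0⟩ := intermediate_value_Icc' hx0 hGc.continuousOn (show (0:ℝ) ∈ Set.Icc (G x) (G 0) from ⟨hcon, by rw [hG0]; norm_num⟩)
    have hy1 : 0 < y := by
      rcases hy.1.lt_or_eq with h | h
      · exact h
      · rw [← h, hG0] at hy0; norm_num at hy0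
    have := hς1.2 (show y ∈ {x : ℝ | 0 < x ∧ G x = 0} from ⟨hy1, hy0⟩)
    linarith [hy.2]
  have hsS : ∀ r, 0 ≤ r → r < ς1 → Summable (fun k => s k * r ^ k) := by
    intro r hr0 hr1
    have := hss ((r + ς1) / 2) (by linarith) (fun x hx0 hx1 => hGpos x hx0 (by linarith))
    refine Summable.of_nonneg_of_le (fun k => mul_nonneg (hs0 k) (by positivity)) (fun k => ?_) this
    exact mul_le_mul_of_nonneg_left (pow_le_pow_left₀ hr0 (by linarith) k) (hs0 k)
  set S : ℝ → ℝ := fun r => ∑' k, s k * r ^ k with hS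
  have hkey : ∀ r, 0 ≤ r → r < ς1 → S r * G r = -(r * deriv G r) := by
    intro r hr0 hr1
    exact cauchy_id (𝕜 := ℝ) g s hgs hs0 hrec r (by
      simpa [abs_of_nonneg hr0] using hsS r hr0 hr1)
  have hkey' : ∀ r, 0 ≤ r → r < ς1 → 1 + r * deriv G r / G r = 1 - S r := by
    intro r hr0 hr1
    have h1 := hkey r hr0 hr1
    have h2 := (hGpos r hr0 hr1).ne'
    field_simp
    linarith
  have hs1 : 0 < s 1 := by
    have h0 := hrec 0
    have h1 := hrec 1
    simp [Finset.Nat.antidiagonal_succ, hg, ha0] at h0 h1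
    rw [h0] at h1
    linarith
  have hS0 : S 0 = 0 := by
    have h0 := hrec 0
    simp [hg, ha0] at h0
    simp only [hS]
    rw [tsum_eq_single 0]
    · simp [h0]
    · intro n hn; simp [hn]
  have hSmono : ∀ x y, 0 ≤ x → x < y → y < ς1 → S x < S y := by
    intro x y hx hxy hy
    refine Summable.tsum_lt_tsum (i := 1) (fun k => ?_) ?_ (hsS x hx (hxy.trans hy)) (hsS y (hx.trans hxy.le) hy)
    · exact mul_le_mul_of_nonneg_left (pow_le_pow_left₀ hx hxy.le k) (hs0 k)
    · simp only [pow_one]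
      exact mul_lt_mul_of_pos_left hxy hs1
  have hdGc : Continuous (deriv G) := by
    have : deriv G = fun z => ∑' n : ℕ, ((n + 1 : ℝ) * g (n + 1)) * z ^ n := by
      ext z; exact (ps_hasDerivAt (𝕜 := ℝ) g hgs z).deriv
    rw [this]
    have hs2 : ∀ r : ℝ, Summable (fun n : ℕ => |(n + 1 : ℝ) * g (n + 1)| * r ^ n) := by
      intro r
      apply Summable.of_norm
      have h := (summable_nat_add_iff 1).mpr (hgs' (|r| + 1))
      refine Summable.of_nonneg_of_le (fun n => norm_nonneg _) (fun n => ?_) h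
      rw [norm_mul, norm_pow, Real.norm_eq_abs, Real.norm_eq_abs, abs_abs, abs_mul, 
        abs_of_nonneg (by positivity : (0:ℝ) ≤ (n:ℝ) + 1)]
      push_cast
      refine mul_le_mul_of_nonneg_left ?_ (by positivity)
      calc |r| ^ n ≤ (|r| + 1) ^ n := by gcongr; linarith
        _ ≤ (|r| + 1) ^ (n + 1) := pow_le_pow_right₀ (by linarith [abs_nonneg r]) (by omega)
    exact continuous_iff_continuousAt.mpr fun x => (ps_hasDerivAt (𝕜 := ℝ) _ hs2 x).continuousAt
  -- existence of a point with large S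
  have hex : ∃ r1, 0 < r1 ∧ r1 < ς1 ∧ 1 - α ≤ S r1 := by
    by_contra hcon
    push Not at hcon
    have hmono : MonotoneOn (fun x => x * G x) (Set.Icc 0 ς1) := by
      have hd : ∀ x, HasDerivAt (fun x => x * G x) (1 * G x + x * deriv G x) x :=
        fun x => (hasDerivAt_id x).mul (hGd x)
      refine monotoneOn_of_deriv_nonneg (convex_Icc _ _) (by fun_prop)
        (fun x _ => (hd x).differentiableAt.differentiableWithinAt) ?_
      intro x hx
      rw [interior_Icc] at hx
      rw [(hd x).deriv]
      have h1 := hcon x hx.1 hx.2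
      have h2 := hkey x hx.1.le hx.2
      have h3 := hGpos x hx.1.le hx.2
      nlinarith
    have h1 := hmono (show ς1 / 2 ∈ Set.Icc 0 ς1 by constructor <;> linarith)
      (show ς1 ∈ Set.Icc 0 ς1 by constructor <;> linarith) (by linarith)
    have h2 := hGpos (ς1 / 2) (by linarith) (by linarith)
    simp only [hGς] at h1
    nlinarith
  obtain ⟨r1, hr10, hr11, hr1S⟩ := hex
  have hScont : ContinuousOn S (Set.Icc 0 r1) := by
    have : ContinuousOn (fun r => -(r * deriv G r) / G r) (Set.Icc 0 r1) := by
      refine ContinuousOn.div (by fun_prop) hGc.continuousOn ?_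
      intro x hx
      exact (hGpos x hx.1 (by linarith [hx.2])).ne'
    refine this.congr fun x hx => ?_
    rw [eq_div_iff (hGpos x hx.1 (by linarith [hx.2])).ne']
    exact hkey x hx.1 (by linarith [hx.2])
  obtain ⟨r3, hr3, hr3S⟩ := intermediate_value_Icc hr10.le hScont
    (show 1 - α ∈ Set.Icc (S 0) (S r1) from ⟨by rw [hS0]; linarith, hr1S⟩)
  have hr30 : 0 < r3 := by
    rcases hr3.1.lt_or_eq with h | h
    · exact h
    · rw [← h, hS0] at hr3S; linarith
  have hr31 : r3 < ς1 := by linarith [hr3.2]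
  refine ⟨r3, ⟨⟨hr30, hr31⟩, ?_⟩, ?_, ?_⟩
  · rw [hkey' r3 hr30.le hr31]; linarith
  · intro r hr h
    rw [hkey' r hr.1.le hr.2] at h
    rcases lt_trichotomy r r3 with hlt | heq | hgt
    · have := hSmono r r3 hr.1.le hlt hr31; linarith
    · exact heq
    · have := hSmono r3 r hr30.le hgt hr.2; linarith
  · have hset : {r : ℝ | 0 < r ∧ ∀ z : ℂ, ‖z‖ < r →
        α < (1 + z * deriv (fun x : ℂ => ∑' n, ((g n : ℝ) : ℂ) * x ^ n) z / 
          (fun x : ℂ => ∑' n, ((g n : ℝ) : ℂ) * x ^ n) z).re} = Set.Ioc 0 r3 := by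
      ext r
      simp only [Set.mem_ofPred_eq, Set.mem_Ioc]
      refine and_congr_right fun hr0 => ⟨fun h => ?_, fun h z hz => ?_⟩
      · by_contra hcon
        push Not at hcon
        have h1 := h (r3 : ℂ) (by simpa [abs_of_pos hr30] using hcon)
        have h2 := cauchy_id (𝕜 := ℂ) g s hgs hs0 hrec (r3 : ℂ) (by
          simpa [abs_of_nonneg hr30.le] using hsS r3 hr30.le hr31)
        have e1 : (∑' n, ((g n : ℝ) : ℂ) * (r3 : ℂ) ^ n) = ((G r3 : ℝ) : ℂ) := by
          simp only [hG]; push_cast; rfl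
        have e2 : (∑' n, ((s n : ℝ) : ℂ) * (r3 : ℂ) ^ n) = ((S r3 : ℝ) : ℂ) := by
          simp only [hS]; push_cast; rfl
        have hne : ((G r3 : ℝ) : ℂ) ≠ 0 := by
          exact_mod_cast (hGpos r3 hr30.le hr31).ne'
        change (∑' n, ((s n : ℝ) : ℂ) * (r3 : ℂ) ^ n) * (∑' n, ((g n : ℝ) : ℂ) * (r3 : ℂ) ^ n) = _ at h2
        rw [e1, e2] at h2
        rw [e1] at h1
        have h3 := neg_eq_iff_eq_neg.mpr h2 |>.symm
        change (r3 : ℂ) * deriv (fun x : ℂ => ∑' n, ((g n : ℝ) : ℂ) * x ^ n) (r3 : ℂ) = _ at h3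
        rw [h3, neg_div, mul_div_assoc, div_self hne, hr3S] at h1
        simp at h1
      · have hz1 : ‖z‖ < ς1 := by linarith
        have h2 := cauchy_id (𝕜 := ℂ) g s hgs hs0 hrec z (hsS _ (norm_nonneg z) hz1)
        change (∑' n, ((s n : ℝ) : ℂ) * z ^ n) * (∑' n, ((g n : ℝ) : ℂ) * z ^ n) = _ at h2
        by_cases hne : (∑' n, ((g n : ℝ) : ℂ) * z ^ n) = 0
        · rw [hne]; simpa using hα1
        · have h3 := neg_eq_iff_eq_neg.mpr h2 |>.symm
          change z * deriv (fun x : ℂ => ∑' n, ((g n : ℝ) : ℂ) * x ^ n) z = _ at h3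
          rw [h3, neg_div, mul_div_assoc, div_self hne, mul_one]
          have h4 : ‖∑' n, ((s n : ℝ) : ℂ) * z ^ n‖ ≤ S ‖z‖ := by
            refine tsum_of_norm_bounded (hsS _ (norm_nonneg z) hz1).hasSum (fun n => ?_)
            rw [norm_mul, norm_pow, Complex.norm_real, Real.norm_eq_abs, abs_of_nonneg (hs0 n)]
          have h5 := hSmono ‖z‖ r3 (norm_nonneg z) (by linarith) hr31
          have h6 := Complex.re_le_norm (∑' n, ((s n : ℝ) : ℂ) * z ^ n)
          simp only [Complex.add_re, Complex.neg_re, Complex.one_re]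
          linarith
    rw [hset, csSup_Ioc hr30]


lemma alt_sum_right (m : ℕ) : ∀ t : ℕ → ℝ, (∀ n, 0 ≤ t n) → (∀ n, t (n + 1) ≤ t n) →
    0 ≤ ∑ i ∈ Finset.range m, (-1) ^ i * t i ∧ ∑ i ∈ Finset.range m, (-1) ^ i * t i ≤ t 0 := by
  induction m with
  | zero => intro t ht _; simpa using ht 0
  | succ m ih =>
    intro t ht hd
    obtain ⟨h1, h2⟩ := ih (fun n => t (n + 1)) (fun n => ht _) (fun n => hd _)
    rw [Finset.sum_range_succ']
    have e : ∑ i ∈ Finset.range m, (-1 : ℝ) ^ (i + 1) * t (i + 1) =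
        -∑ i ∈ Finset.range m, (-1) ^ i * t (i + 1) := by
      rw [← Finset.sum_neg_distrib]
      exact Finset.sum_congr rfl fun i _ => by ring
    rw [e]
    have := hd 0
    simp only [zero_add] at h2
    constructor <;> simp <;> linarith

lemma alt_sum_left (t : ℕ → ℝ) (ht : ∀ n, 0 ≤ t n) (k : ℕ) : (∀ n, n < k → t n ≤ t (n + 1)) →
    -t k ≤ (-1) ^ (k + 1) * ∑ i ∈ Finset.range (k + 1), (-1) ^ i * t i ∧
    (-1) ^ (k + 1) * ∑ i ∈ Finset.range (k + 1), (-1) ^ i * t i ≤ 0 := by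
  induction k with
  | zero => intro _; simpa using ht 0
  | succ k ih =>
    intro h
    obtain ⟨h1, h2⟩ := ih (fun n hn => h n (by omega))
    have h3 := h k (by omega)
    have e : (-1 : ℝ) ^ (k + 1 + 1) * ∑ i ∈ Finset.range (k + 1 + 1), (-1) ^ i * t i =
        -((-1) ^ (k + 1) * ∑ i ∈ Finset.range (k + 1), (-1) ^ i * t i) - t (k + 1) := by
      rw [Finset.sum_range_succ, mul_add, ← mul_assoc, ← pow_add]
      have : (-1 : ℝ) ^ (k + 1 + 1 + (k + 1)) = -1 := Odd.neg_one_pow ⟨k + 1, by ring⟩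
      rw [this]; ring
    rw [e]
    constructor <;> linarith

lemma hutch_sign (d : ℕ → ℝ) (hd : ∀ n, 0 < d n) (h4 : ∀ n, 4 * d (n + 1) < d n) (k m : ℕ) :
    0 < (-1) ^ k * ∑ n ∈ Finset.range (k + (m + 1)),
      (-1) ^ n * ((∏ i ∈ Finset.range n, d i) * (1 / (2 * d k)) ^ n) := by
  set x := 1 / (2 * d k) with hx
  have hxpos : 0 < x := by have := hd k; positivity
  set t : ℕ → ℝ := fun n => (∏ i ∈ Finset.range n, d i) * x ^ n with ht
  have htpos : ∀ n, 0 < t n := fun n => 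
    mul_pos (Finset.prod_pos fun i _ => hd i) (by positivity)
  have htsucc : ∀ n, t (n + 1) = t n * (d n * x) := by
    intro n; simp only [ht]; rw [Finset.prod_range_succ]; ring
  have hanti : StrictAnti d := strictAnti_nat_of_succ_lt fun n => by linarith [h4 n, hd (n + 1)]
  have hdk : d k * x = 1 / 2 := by rw [hx]; have := (hd k).ne'; field_simp
  have hright : ∀ n, k ≤ n → t (n + 1) ≤ t n * (1 / 2) := by
    intro n hn
    rw [htsucc]
    refine mul_le_mul_of_nonneg_left ?_ (htpos n).le
    rw [← hdk]
    exact mul_le_mul_of_nonneg_right (hanti.antitone hn) hxpos.le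
  have hleft : ∀ n, n < k → t n * 2 < t (n + 1) := by
    intro n hn
    rw [htsucc]
    refine mul_lt_mul_of_pos_left ?_ (htpos n)
    have h1 : d k ≤ d (n + 1) := hanti.antitone hn
    have h2 := h4 n
    have : 4 * d k * x < d n * x := mul_lt_mul_of_pos_right (by linarith) hxpos
    linarith
  change 0 < (-1) ^ k * ∑ n ∈ Finset.range (k + (m + 1)), (-1) ^ n * t n
  rw [Finset.sum_range_add, mul_add]
  have e1 : (-1 : ℝ) ^ k * ∑ i ∈ Finset.range (m + 1), (-1) ^ (k + i) * t (k + i) =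
      t k - ∑ i ∈ Finset.range m, (-1) ^ i * t (k + 1 + i) := by
    rw [Finset.mul_sum, Finset.sum_range_succ', sub_eq_add_neg, ← Finset.sum_neg_distrib, add_comm]
    congr 1
    · simp only [add_zero]
      rw [← mul_assoc, ← pow_add, Even.neg_one_pow ⟨k, rfl⟩, one_mul]
    · refine Finset.sum_congr rfl fun i _ => ?_
      rw [← mul_assoc, ← pow_add]
      have : (-1 : ℝ) ^ (k + (k + (i + 1))) = -(-1) ^ i := by
        have : k + (k + (i + 1)) = 2 * k + i + 1 := by ring
        rw [this, pow_succ, pow_add, pow_mul]; simp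
      rw [this, show k + (i + 1) = k + 1 + i by ring]; ring
  rw [e1]
  have h1 := (alt_sum_right m (fun i => t (k + 1 + i)) (fun i => (htpos _).le) (fun i => by
    have := hright (k + 1 + i) (by omega)
    have h2 := htpos (k + 1 + i)
    show t (k + 1 + i + 1) ≤ t (k + 1 + i)
    linarith)).2
  simp only [add_zero] at h1
  have h2 := hright k le_rfl
  have h3 := htpos k
  rcases k with _ | k
  · simp at *
    linarith
  · have h5 := (alt_sum_left t (fun n => (htpos n).le) k (fun n hn => by
      have := hleft n (by omega); linarith [htpos n])).1
    have h6 := hleft k (by omega)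
    linarith

lemma hutch_roots (d : ℕ → ℝ) (hd : ∀ n, 0 < d n) (h4 : ∀ n, 4 * d (n + 1) < d n) (N : ℕ) :
    ∀ z : ℂ, Polynomial.aeval z (∑ n ∈ Finset.range (N + 1),
      Polynomial.monomial n ((-1) ^ n * ∏ i ∈ Finset.range n, d i) : Polynomial ℝ) = 0 →
      ∃ x : ℝ, 0 < x ∧ z = x := by
  intro z hz
  set P : Polynomial ℝ := ∑ n ∈ Finset.range (N + 1),
      Polynomial.monomial n ((-1) ^ n * ∏ i ∈ Finset.range n, d i) with hP
  have hdeg : P.natDegree ≤ N := by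
    refine Polynomial.natDegree_sum_le_of_forall_le _ _ fun n hn => ?_
    refine (Polynomial.natDegree_monomial_le _).trans ?_
    have := Finset.mem_range.mp hn; omega
  set x : ℕ → ℝ := fun k => 1 / (2 * d k) with hx
  have hxpos : ∀ k, 0 < x k := fun k => by have := hd k; simp only [hx]; positivity
  have hxmono : StrictMono x := strictMono_nat_of_lt_succ fun n => by
    have h1 := hd n; have h2 := hd (n + 1); have h3 := h4 n
    simp only [hx]
    apply one_div_lt_one_div_of_lt <;> linarith
  have hsign : ∀ k, k ≤ N → 0 < (-1) ^ k * P.eval (x k) := by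
    intro k hk
    have := hutch_sign d hd h4 k (N - k)
    rw [show k + (N - k + 1) = N + 1 by omega] at this
    rw [hP, Polynomial.eval_finsetSum]
    simpa only [Polynomial.eval_monomial, mul_assoc] using this
  have hy : ∀ k : Fin N, ∃ y, x k < y ∧ y < x (k + 1) ∧ P.eval y = 0 := by
    intro k
    have h1 := hsign k (by omega)
    have h2 := hsign (k + 1) (by omega)
    have hc : ContinuousOn (fun y => (-1) ^ (k : ℕ) * P.eval y) (Set.Icc (x k) (x (k + 1))) := by
      fun_prop
    obtain ⟨y, hy, hy0⟩ := intermediate_value_Ioo' (hxmono (Nat.lt_succ_self k)).le hc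
      (show (0:ℝ) ∈ Set.Ioo _ _ from ⟨by rw [pow_succ] at h2; simp; linarith, h1⟩)
    refine ⟨y, hy.1, hy.2, ?_⟩
    simpa using hy0
  choose y hy1 hy2 hy3 using hy
  have hyinj : Function.Injective y := by
    have : StrictMono y := by
      intro i j hij
      have : x (i + 1) ≤ x j := hxmono.monotone (by have : (i:ℕ) < j := hij; omega)
      linarith [hy2 i, hy1 j]
    exact this.injective
  by_contra hcon
  push Not at hcon
  set Z : Finset ℂ := insert z (Finset.univ.image fun i => ((y i : ℝ) : ℂ)) with hZ
  have hcard : Z.card = N + 1 := by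
    rw [hZ, Finset.card_insert_of_notMem, Finset.card_image_of_injective]
    · simp
    · intro i j h; exact hyinj (Complex.ofReal_injective h)
    · intro h
      obtain ⟨i, _, hi⟩ := Finset.mem_image.mp h
      exact hcon (y i) ((hxpos _).trans (hy1 i)) hi.symm
  have hP0 : P ≠ 0 := by
    intro h
    have := hsign 0 (by omega)
    simp [h] at this
  have := Polynomial.card_le_degree_of_subset_roots (p := P.map (algebraMap ℝ ℂ)) (Z := Z) (by
    intro w hw
    rw [Polynomial.mem_roots (by rwa [Ne, Polynomial.map_eq_zero]), Polynomial.IsRoot.def,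
      Polynomial.eval_map_algebraMap]
    have hw' : w ∈ Z := hw
    rw [hZ, Finset.mem_insert] at hw'
    rcases hw' with rfl | hw'
    · exact hz
    · obtain ⟨i, _, rfl⟩ := Finset.mem_image.mp hw'
      have : Polynomial.aeval ((algebraMap ℝ ℂ) (y i)) P = 0 := by
        rw [Polynomial.aeval_algebraMap_apply]; simp [hy3 i]
      exact this)
  rw [Polynomial.natDegree_map] at this
  omega

/-- polynomial approximations to the q-cosine / q-sine. -/
noncomputable def qtrig (q : ℝ) : ℕ → Polynomial ℝ × Polynomial ℝ
  | 0 => (1, 0)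
  | K + 1 =>
    let A := (qtrig q K).1.comp (Polynomial.C (q ^ 2) * Polynomial.X) -
      Polynomial.X * (qtrig q K).2.comp (Polynomial.C (q ^ 2) * Polynomial.X)
    (A, Polynomial.C q * (qtrig q K).2.comp (Polynomial.C (q ^ 2) * Polynomial.X) + A)

lemma qtrig_im (q : ℝ) (hq : 0 < q) (K : ℕ) : ∀ l : ℂ, 0 < l.im →
    (Polynomial.aeval (l ^ 2) (qtrig q (K + 1)).1 *
      (starRingEnd ℂ) (l * Polynomial.aeval (l ^ 2) (qtrig q (K + 1)).2)).im < 0 := by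
  induction K with
  | zero =>
    intro l hl
    simp [qtrig, hl]
  | succ K ih =>
    intro l hl
    have h1 := ih (q * l) (by simp; positivity)
    set c := Polynomial.aeval (((q:ℂ) * l) ^ 2) (qtrig q (K + 1)).1 with hc
    set b := Polynomial.aeval (((q:ℂ) * l) ^ 2) (qtrig q (K + 1)).2 with hb
    set c' := Polynomial.aeval (l ^ 2) (qtrig q (K + 1 + 1)).1 with hc'
    set b' := Polynomial.aeval (l ^ 2) (qtrig q (K + 1 + 1)).2 with hb'
    have e1 : c' = c - l ^ 2 * b := by
      rw [hc', qtrig]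
      simp [Polynomial.aeval_comp, hc, hb, mul_pow]
    have e2 : b' = q * b + c' := by
      rw [hb', hc', qtrig]
      simp [Polynomial.aeval_comp, hc, hb, mul_pow]
    have e3 : (c' * (starRingEnd ℂ) (l * b')).im = (c * (starRingEnd ℂ) (q * l * b)).im
        - l.im * (Complex.normSq c' + q * Complex.normSq (l * b)) := by
      have : c' * (starRingEnd ℂ) (l * b') = c * (starRingEnd ℂ) (q * l * b)
          + (starRingEnd ℂ l) * ((Complex.normSq c' : ℝ) : ℂ) - l * q * ((Complex.normSq (l * b) : ℝ) : ℂ) := by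
        rw [e2, ← Complex.mul_conj, ← Complex.mul_conj, map_mul, map_add, map_mul, map_mul, map_mul, map_mul,
          Complex.conj_ofReal]
        linear_combination (q * starRingEnd ℂ l * starRingEnd ℂ b) * e1
      rw [this]
      simp
      ring
    rw [e3]
    have := Complex.normSq_nonneg c'
    have := Complex.normSq_nonneg (l * b)
    have : 0 ≤ l.im * (Complex.normSq c' + q * Complex.normSq (l * b)) := by positivity
    linarith

lemma qtrig_roots (q : ℝ) (hq : 0 < q) (K : ℕ) (w : ℂ)
    (h : Polynomial.aeval w (qtrig q (K + 1)).1 = 0 ∨ Polynomial.aeval w (qtrig q (K + 1)).2 = 0) :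
    ∃ x : ℝ, 0 ≤ x ∧ w = x := by
  obtain ⟨l, hl⟩ := IsAlgClosed.exists_pow_nat_eq w (n := 2) (by norm_num)
  have key : ∀ l : ℂ, l ^ 2 = w → ¬ 0 < l.im := by
    intro l hl hpos
    have := qtrig_im q hq K l hpos
    rw [hl] at this
    rcases h with h | h <;> simp [h] at this
  have h1 := key l hl
  have h2 := key (-l) (by rw [neg_sq, hl])
  have h3 : l.im = 0 := by
    simp at h1 h2; linarith
  refine ⟨l.re ^ 2, sq_nonneg _, ?_⟩
  have : l = (l.re : ℂ) := by apply Complex.ext <;> simp [h3]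
  rw [← hl]; push_cast; rw [← this]

lemma qtrig_seq (q : ℝ) (hq : 0 < q) (hq1 : q < 1) (u v : ℕ → ℕ → ℝ) (U V : ℕ → ℝ)
    (hU0 : U 0 = 1) (hUn : ∀ n, 0 ≤ U n) (hVn : ∀ n, 0 ≤ V n)
    (hU : ∀ n, U (n + 1) = (q ^ 2) ^ (n + 1) * U (n + 1) + (q ^ 2) ^ n * V n)
    (hV : ∀ n, V n = q * (q ^ 2) ^ n * V n + U n)
    (hu0 : ∀ n, u 0 n = if n = 0 then 1 else 0) (hv0 : ∀ n, v 0 n = 0)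
    (hu1 : ∀ K, u (K + 1) 0 = u K 0)
    (hu : ∀ K n, u (K + 1) (n + 1) = (q ^ 2) ^ (n + 1) * u K (n + 1) + (q ^ 2) ^ n * v K n)
    (hv : ∀ K n, v (K + 1) n = q * (q ^ 2) ^ n * v K n + u (K + 1) n) :
    (∀ K n, 0 ≤ u K n ∧ u K n ≤ U n) ∧ (∀ K n, 0 ≤ v K n ∧ v K n ≤ V n) ∧
    (∀ n, Tendsto (fun K => u K n) atTop (𝓝 (U n))) ∧
    (∀ n, Tendsto (fun K => v K n) atTop (𝓝 (V n))) := by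
  have hb : ∀ K, (∀ n, 0 ≤ u K n ∧ u K n ≤ U n) ∧ (∀ n, 0 ≤ v K n ∧ v K n ≤ V n) := by
    intro K
    induction K with
    | zero =>
      refine ⟨fun n => ?_, fun n => ?_⟩
      · rw [hu0]
        split_ifs with h
        · rw [h, hU0]; norm_num
        · exact ⟨le_rfl, hUn n⟩
      · rw [hv0]; exact ⟨le_rfl, hVn n⟩
    | succ K ih =>
      have h1 : ∀ n, 0 ≤ u (K + 1) n ∧ u (K + 1) n ≤ U n := by
        intro n
        rcases n with _ | n
        · rw [hu1]; exact ih.1 0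
        · rw [hu, hU]
          have h1 := ih.1 (n + 1)
          have h2 := ih.2 n
          exact ⟨add_nonneg (mul_nonneg (by positivity) h1.1) (mul_nonneg (by positivity) h2.1),
            add_le_add (mul_le_mul_of_nonneg_left h1.2 (by positivity))
              (mul_le_mul_of_nonneg_left h2.2 (by positivity))⟩
      refine ⟨h1, fun n => ?_⟩
      rw [hv, hV]
      have h2 := ih.2 n
      exact ⟨add_nonneg (mul_nonneg (by positivity) h2.1) (h1 n).1,
            add_le_add (mul_le_mul_of_nonneg_left h2.2 (by positivity)) (h1 n).2⟩
  have hm : ∀ K, (∀ n, u K n ≤ u (K + 1) n) ∧ (∀ n, v K n ≤ v (K + 1) n) := by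
    intro K
    induction K with
    | zero =>
      refine ⟨fun n => ?_, fun n => ?_⟩
      · rcases n with _ | n
        · rw [hu1]
        · rw [hu0]; simpa using ((hb 1).1 (n + 1)).1
      · rw [hv0]; exact ((hb 1).2 n).1
    | succ K ih =>
      have h1 : ∀ n, u (K + 1) n ≤ u (K + 1 + 1) n := by
        intro n
        rcases n with _ | n
        · rw [hu1 (K + 1)]
        · refine (hu K n).le.trans ?_
          rw [hu (K + 1)]
          exact add_le_add (mul_le_mul_of_nonneg_left (ih.1 _) (by positivity))
              (mul_le_mul_of_nonneg_left (ih.2 _) (by positivity))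
      refine ⟨h1, fun n => ?_⟩
      refine (hv K n).le.trans ?_
      rw [hv (K + 1)]
      exact add_le_add (mul_le_mul_of_nonneg_left (ih.2 _) (by positivity)) (h1 n)
  have hul : ∀ n, ∃ l, Tendsto (fun K => u K n) atTop (𝓝 l) := fun n =>
    ⟨_, tendsto_atTop_ciSup (monotone_nat_of_le_succ fun K => (hm K).1 n)
      ⟨U n, by rintro _ ⟨K, rfl⟩; exact ((hb K).1 n).2⟩⟩
  have hvl : ∀ n, ∃ l, Tendsto (fun K => v K n) atTop (𝓝 l) := fun n =>
    ⟨_, tendsto_atTop_ciSup (monotone_nat_of_le_succ fun K => (hm K).2 n)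
      ⟨V n, by rintro _ ⟨K, rfl⟩; exact ((hb K).2 n).2⟩⟩
  have hq2 : q ^ 2 < 1 := by nlinarith
  have hvstep : ∀ n, Tendsto (fun K => u K n) atTop (𝓝 (U n)) →
      Tendsto (fun K => v K n) atTop (𝓝 (V n)) := by
    intro n hn
    obtain ⟨l, hl⟩ := hvl n
    have h1 : Tendsto (fun K => v (K + 1) n) atTop (𝓝 (q * (q ^ 2) ^ n * l + U n)) := by
      simp_rw [hv]
      exact (hl.const_mul _).add (hn.comp (tendsto_add_atTop_nat 1))
    have h2 := tendsto_nhds_unique h1 (hl.comp (tendsto_add_atTop_nat 1))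
    have h3 := hV n
    have h4 : q * (q ^ 2) ^ n < 1 := by
      have := pow_le_one₀ (n := n) (by positivity : 0 ≤ q ^ 2) hq2.le
      nlinarith
    have : l = V n := by
      have : (1 - q * (q ^ 2) ^ n) * (l - V n) = 0 := by linarith
      rcases mul_eq_zero.mp this with h | h <;> linarith
    rwa [this] at hl
  have hulim : ∀ n, Tendsto (fun K => u K n) atTop (𝓝 (U n)) := by
    intro n
    induction n with
    | zero =>
      have : ∀ K, u K 0 = 1 := by
        intro K
        induction K with
        | zero => simp [hu0]
        | succ K ih => rw [hu1, ih]
      simp_rw [this, hU0]; exact tendsto_const_nhds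
    | succ n ih =>
      have ihv := hvstep n ih
      obtain ⟨l, hl⟩ := hul (n + 1)
      have h1 : Tendsto (fun K => u (K + 1) (n + 1)) atTop (𝓝 ((q ^ 2) ^ (n + 1) * l + (q ^ 2) ^ n * V n)) := by
        simp_rw [hu]
        exact (hl.const_mul _).add (ihv.const_mul _)
      have h2 := tendsto_nhds_unique h1 (hl.comp (tendsto_add_atTop_nat 1))
      have h3 := hU n
      have h4 : (q ^ 2) ^ (n + 1) < 1 := pow_lt_one₀ (by positivity) hq2 (by omega)
      have : l = U (n + 1) := by
        have : (1 - (q ^ 2) ^ (n + 1)) * (l - U (n + 1)) = 0 := by linarith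
        rcases mul_eq_zero.mp this with h | h <;> linarith
      rwa [this] at hl
  exact ⟨fun K => (hb K).1, fun K => (hb K).2, hulim, fun n => hvstep n (hulim n)⟩

lemma qtrig_coeff (q : ℝ) (hq : 0 < q) (hq1 : q < 1) (U V : ℕ → ℝ)
    (hU0 : U 0 = 1) (hUn : ∀ n, 0 ≤ U n) (hVn : ∀ n, 0 ≤ V n)
    (hU : ∀ n, U (n + 1) = (q ^ 2) ^ (n + 1) * U (n + 1) + (q ^ 2) ^ n * V n)
    (hV : ∀ n, V n = q * (q ^ 2) ^ n * V n + U n) :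
    (∀ K n, |(qtrig q K).1.coeff n| ≤ U n) ∧ (∀ K n, |(qtrig q K).2.coeff n| ≤ V n) ∧
    (∀ n, Tendsto (fun K => (qtrig q K).1.coeff n) atTop (𝓝 ((-1) ^ n * U n))) ∧
    (∀ n, Tendsto (fun K => (qtrig q K).2.coeff n) atTop (𝓝 ((-1) ^ n * V n))) := by
  have hsq : ∀ n : ℕ, (-1 : ℝ) ^ n * (-1) ^ n = 1 := fun n => by
    rw [← pow_add, Even.neg_one_pow ⟨n, rfl⟩]
  obtain ⟨h1, h2, h3, h4⟩ := qtrig_seq q hq hq1 (fun K n => (-1) ^ n * (qtrig q K).1.coeff n)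
    (fun K n => (-1) ^ n * (qtrig q K).2.coeff n) U V hU0 hUn hVn hU hV
    (fun n => by
      simp only [qtrig, Polynomial.coeff_one]
      split_ifs with h
      · simp [h]
      · simp)
    (fun n => by simp [qtrig, -map_pow])
    (fun K => by simp [qtrig, -map_pow])
    (fun K n => by simp [qtrig, -map_pow, Polynomial.coeff_X_mul]; ring)
    (fun K n => by simp [qtrig, -map_pow]; ring)
  have habs : ∀ (n : ℕ) (x : ℝ), |x| = |(-1) ^ n * x| := fun n x => by
    rw [abs_mul, abs_pow]; simp
  refine ⟨fun K n => ?_, fun K n => ?_, fun n => ?_, fun n => ?_⟩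
  · rw [habs n, abs_of_nonneg (h1 K n).1]; exact (h1 K n).2
  · rw [habs n, abs_of_nonneg (h2 K n).1]; exact (h2 K n).2
  · have := (h3 n).const_mul ((-1) ^ n)
    simpa only [← mul_assoc, hsq, one_mul] using this
  · have := (h4 n).const_mul ((-1) ^ n)
    simpa only [← mul_assoc, hsq, one_mul] using this

lemma qtrig_coeff_zero (q : ℝ) (hq : 0 < q) (K : ℕ) :
    (qtrig q K).1.coeff 0 = 1 ∧ 0 ≤ (qtrig q K).2.coeff 0 ∧ 0 < (qtrig q (K + 1)).2.coeff 0 := by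
  have h1 : ∀ K, (qtrig q K).1.coeff 0 = 1 := by
    intro K
    induction K with
    | zero => simp [qtrig, -map_pow]
    | succ K ih => simp [qtrig, -map_pow, ih]
  have h2 : ∀ K, (qtrig q (K + 1)).2.coeff 0 = q * (qtrig q K).2.coeff 0 + 1 := by
    intro K; simp [qtrig, -map_pow, h1]
  have h3 : ∀ K, 0 ≤ (qtrig q K).2.coeff 0 := by
    intro K
    induction K with
    | zero => simp [qtrig, -map_pow]
    | succ K ih => rw [h2]; positivity
  refine ⟨h1 K, h3 K, ?_⟩
  rw [h2]; have := h3 K; positivity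

lemma qtrig_roots_pos (q : ℝ) (hq : 0 < q) (K : ℕ) (κ : ℝ) (hκ : 0 < κ) (p : Polynomial ℝ)
    (hp : p = (qtrig q (K + 1)).1 ∨ p = (qtrig q (K + 1)).2) (z : ℂ)
    (h : Polynomial.aeval z (p.comp (Polynomial.C κ * Polynomial.X)) = 0) :
    ∃ x : ℝ, 0 < x ∧ z = x := by
  have h' : Polynomial.aeval ((κ : ℂ) * z) p = 0 := by
    simpa [Polynomial.aeval_comp] using h
  obtain ⟨x, hx, hxz⟩ := qtrig_roots q hq K ((κ : ℂ) * z) (by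
    rcases hp with rfl | rfl
    · exact Or.inl h'
    · exact Or.inr h')
  have hx0 : x ≠ 0 := by
    rintro rfl
    rw [hxz] at h'
    simp only [Complex.ofReal_zero] at h'
    rw [← Polynomial.coeff_zero_eq_aeval_zero'] at h'
    have h0 : p.coeff 0 = 0 := by simpa using h'
    rcases hp with rfl | rfl
    · rw [(qtrig_coeff_zero q hq _).1] at h0; norm_num at h0
    · exact (qtrig_coeff_zero q hq K).2.2.ne' h0
  have hκ' : (κ : ℂ) ≠ 0 := by exact_mod_cast hκ.ne'
  refine ⟨x / κ, div_pos (lt_of_le_of_ne hx hx0.symm) hκ, ?_⟩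
  push_cast
  rw [eq_div_iff hκ', ← hxz]; ring


lemma qPoch_summable (a q : ℝ) (hq : 0 < q) (hq1 : q < 1) :
    Summable (fun k : ℕ => ‖-(a * q ^ k)‖) := by
  have := ((summable_geometric_of_lt_one hq.le hq1).mul_left a).norm
  simpa using this

lemma qPoch_succ (a q : ℝ) (hq : 0 < q) (hq1 : q < 1) :
    qPochInf a q = (1 - a) * qPochInf (a * q) q := by
  unfold qPochInf
  have h : Multipliable (fun k : ℕ => 1 - a * q * q ^ k) := by
    have := multipliable_one_add_of_summable (qPoch_summable (a * q) q hq hq1)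
    simpa [sub_eq_add_neg] using this
  have e : ∀ k : ℕ, 1 - a * q ^ (k + 1) = 1 - a * q * q ^ k := fun k => by ring
  have h2 : Multipliable (fun k : ℕ => 1 - a * q ^ (k + 1)) := by
    simp only [e]
    exact h
  have h3 := tprod_eq_zero_mul' (f := fun k : ℕ => 1 - a * q ^ k) h2
  rw [h3]
  simp only [e, pow_zero, mul_one]

lemma qPoch_ne (a q : ℝ) (hq : 0 < q) (hq1 : q < 1) (ha : 0 < a) (ha1 : a < 1) :
    qPochInf a q ≠ 0 := by
  unfold qPochInf
  have := tprod_one_add_ne_zero_of_summable (f := fun k : ℕ => -(a * q ^ k)) ?_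
    (qPoch_summable a q hq hq1)
  · simpa [sub_eq_add_neg] using this
  · intro k
    have h1 : q ^ k ≤ 1 := pow_le_one₀ hq.le hq1.le
    have h2 : 0 < q ^ k := pow_pos hq k
    have : a * q ^ k < 1 := by nlinarith
    intro h
    linarith

lemma qGamma_ne (q x : ℝ) (hq : 0 < q) (hq1 : q < 1) (hx : 0 < x) : qGamma q x ≠ 0 := by
  unfold qGamma
  have h1 := qPoch_ne q q hq hq1 hq hq1
  have h2 := qPoch_ne (q ^ x) q hq hq1 (Real.rpow_pos_of_pos hq x)
    (Real.rpow_lt_one hq.le hq1 hx)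
  have h3 : (1 - q) ^ (1 - x) ≠ 0 := (Real.rpow_pos_of_pos (by linarith) _).ne'
  exact div_ne_zero (mul_ne_zero h1 h3) h2

lemma qGamma_succ (q x : ℝ) (hq : 0 < q) (hq1 : q < 1) (hx : 0 < x) :
    qGamma q (x + 1) = (1 - q ^ x) / (1 - q) * qGamma q x := by
  unfold qGamma
  have hlt := Real.rpow_lt_one hq.le hq1 hx
  have h2 := qPoch_ne (q ^ x) q hq hq1 (Real.rpow_pos_of_pos hq x) hlt
  have e1 : q ^ (x + 1) = q ^ x * q := by rw [Real.rpow_add hq, Real.rpow_one]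
  have e2 := qPoch_succ (q ^ x) q hq hq1
  have hq' : 0 < 1 - q := by linarith
  have e3 : (1 - q) ^ (1 - x) = (1 - q) ^ (1 - (x + 1)) * (1 - q) := by
    rw [show 1 - x = (1 - (x + 1)) + 1 by ring, Real.rpow_add hq', Real.rpow_one]
  rw [e1, e3]
  rw [e2] at h2 ⊢
  have h4 := right_ne_zero_of_mul h2
  have h5 : 1 - q ^ x ≠ 0 := by linarith
  field_simp

noncomputable def mlD (γ σ q : ℝ) (i : ℕ) : ℝ :=
  σ ^ 2 * (1 - q) ^ 2 * q ^ (2 * i) /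
    ((1 - q ^ (2 * i + γ + 1)) * (1 - q ^ (2 * i + γ + 2)))

noncomputable def mlA (γ σ q : ℝ) (n : ℕ) : ℝ :=
  qGamma q (γ + 1) * ((-1) ^ n * σ ^ (2 * n) * q ^ (n * (n - 1)) / qGamma q (2 * n + γ + 1))

lemma mlA_zero (γ σ q : ℝ) (hq : 0 < q) (hq1 : q < 1) (hγ : 0 ≤ γ) : mlA γ σ q 0 = 1 := by
  have := qGamma_ne q (γ + 1) hq hq1 (by linarith)
  simp [mlA, this]

lemma mlA_succ (γ σ q : ℝ) (hq : 0 < q) (hq1 : q < 1) (hγ : 0 ≤ γ) (n : ℕ) :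
    mlA γ σ q (n + 1) = - mlD γ σ q n * mlA γ σ q n := by
  have hx : (0:ℝ) < 2 * n + γ + 1 := by positivity
  have h1 := qGamma_ne q (2 * n + γ + 1) hq hq1 hx
  have h2 := qGamma_succ q (2 * n + γ + 1) hq hq1 hx
  have h3 := qGamma_succ q (2 * n + γ + 1 + 1) hq hq1 (by linarith)
  have e : (2 * ((n + 1 : ℕ) : ℝ) + γ + 1) = 2 * n + γ + 1 + 1 + 1 := by push_cast; ring
  have e2 : (2 * (n:ℝ) + γ + 2) = 2 * n + γ + 1 + 1 := by ring
  have e3 : (n + 1) * (n + 1 - 1) = n * (n - 1) + 2 * n := by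
    cases n with
    | zero => simp
    | succ m => simp; ring
  have l1 := Real.rpow_lt_one hq.le hq1 hx
  have l2 := Real.rpow_lt_one hq.le hq1 (show (0:ℝ) < 2 * n + γ + 1 + 1 by linarith)
  have l1' : 1 - q ^ (2 * n + γ + 1) ≠ 0 := by linarith
  have l2' : 1 - q ^ (2 * n + γ + 1 + 1) ≠ 0 := by linarith
  have l3 : 1 - q ≠ 0 := by linarith
  unfold mlA mlD
  rw [e, e2, e3, h3, h2]
  generalize q ^ (2 * (n:ℝ) + γ + 1 + 1) = y at *
  generalize q ^ (2 * (n:ℝ) + γ + 1) = x at *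
  rw [pow_succ (-1 : ℝ), mul_add 2 n 1, pow_add, pow_add]
  field_simp

lemma mlD_pos (γ σ q : ℝ) (hq : 0 < q) (hq1 : q < 1) (hσ : 0 < σ) (hγ : 0 ≤ γ) (n : ℕ) :
    0 < mlD γ σ q n := by
  have l1 := Real.rpow_lt_one hq.le hq1 (show (0:ℝ) < 2 * n + γ + 1 by positivity)
  have l2 := Real.rpow_lt_one hq.le hq1 (show (0:ℝ) < 2 * n + γ + 2 by positivity)
  have : 0 < 1 - q ^ (2 * n + γ + 1) := by linarith
  have : 0 < 1 - q ^ (2 * n + γ + 2) := by linarith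
  have : 0 < 1 - q := by linarith
  unfold mlD
  positivity

lemma mlD_succ (γ σ q : ℝ) (hq : 0 < q) (hq1 : q < 1) (hσ : 0 < σ) (hγ : 0 ≤ γ) (n : ℕ) :
    mlD γ σ q (n + 1) ≤ q ^ 2 * mlD γ σ q n := by
  have l1 := Real.rpow_lt_one hq.le hq1 (show (0:ℝ) < 2 * n + γ + 1 by positivity)
  have l2 := Real.rpow_lt_one hq.le hq1 (show (0:ℝ) < 2 * n + γ + 2 by positivity)
  have h1 : 0 < 1 - q ^ (2 * n + γ + 1) := by linarith
  have h2 : 0 < 1 - q ^ (2 * n + γ + 2) := by linarith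
  have h3 : 0 < 1 - q := by linarith
  have m1 : q ^ (2 * ((n + 1 : ℕ):ℝ) + γ + 1) ≤ q ^ (2 * n + γ + 1) :=
    Real.rpow_le_rpow_of_exponent_ge hq hq1.le (by push_cast; linarith)
  have m2 : q ^ (2 * ((n + 1 : ℕ):ℝ) + γ + 2) ≤ q ^ (2 * n + γ + 2) :=
    Real.rpow_le_rpow_of_exponent_ge hq hq1.le (by push_cast; linarith)
  unfold mlD
  rw [← mul_div_assoc]
  apply div_le_div₀
  · positivity
  · apply le_of_eq; ring
  · positivity
  · exact mul_le_mul (by linarith) (by linarith) h2.le (by linarith)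

lemma mlA_prod (γ σ q : ℝ) (hq : 0 < q) (hq1 : q < 1) (hγ : 0 ≤ γ) (n : ℕ) :
    mlA γ σ q n = (-1) ^ n * ∏ i ∈ Finset.range n, mlD γ σ q i := by
  induction n with
  | zero => simpa using mlA_zero γ σ q hq hq1 hγ
  | succ n ih => rw [mlA_succ γ σ q hq hq1 hγ, ih, Finset.prod_range_succ]; ring

lemma mlA_summable (γ σ q : ℝ) (hq : 0 < q) (hq1 : q < 1) (hσ : 0 < σ) (hγ : 0 ≤ γ) (r : ℝ) :
    Summable (fun n => |mlA γ σ q n| * r ^ n) := by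
  have hD := mlD_pos γ σ q hq hq1 hσ hγ
  have hlim : Tendsto (mlD γ σ q) atTop (𝓝 0) := by
    have hb : ∀ n, mlD γ σ q n ≤ (q ^ 2) ^ n * mlD γ σ q 0 := by
      intro n
      induction n with
      | zero => simp
      | succ n ih =>
        refine (mlD_succ γ σ q hq hq1 hσ hγ n).trans ?_
        rw [pow_succ' _ n, mul_assoc]
        gcongr
    refine squeeze_zero (fun n => (hD n).le) hb ?_
    have : Tendsto (fun n : ℕ => (q ^ 2) ^ n) atTop (𝓝 0) :=
      tendsto_pow_atTop_nhds_zero_of_lt_one (by positivity) (by nlinarith)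
    simpa using this.mul_const (mlD γ σ q 0)
  have hne : ∀ n, mlA γ σ q n ≠ 0 := by
    intro n
    rw [mlA_prod γ σ q hq hq1 hγ]
    exact mul_ne_zero (by simp) (Finset.prod_pos (fun i _ => hD i)).ne'
  by_cases hr : r = 0
  · subst hr
    refine summable_of_ne_finset_zero (s := {0}) ?_
    intro n hn
    simp at hn
    simp [hn]
  · refine summable_of_ratio_test_tendsto_lt_one zero_lt_one
      (Eventually.of_forall fun n => mul_ne_zero (abs_ne_zero.2 (hne n)) (pow_ne_zero _ hr)) ?_
    have : Tendsto (fun n => mlD γ σ q n * |r|) atTop (𝓝 0) := by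
      simpa using hlim.mul_const |r|
    refine this.congr fun n => ?_
    have h1 := abs_ne_zero.2 (hne n)
    have h2 := abs_ne_zero.2 hr
    rw [mlA_succ γ σ q hq hq1 hγ]
    simp only [abs_mul, norm_mul, Real.norm_eq_abs, abs_abs, abs_neg, abs_of_pos (hD n), abs_pow, pow_succ]
    field_simp

noncomputable def mlU (q : ℝ) (n : ℕ) : ℝ :=
  ∏ i ∈ Finset.range n, q ^ (2 * i) / ((1 - q ^ (2 * i + 1)) * (1 - q ^ (2 * i + 2)))

noncomputable def mlV (q : ℝ) (n : ℕ) : ℝ := mlU q n / (1 - q ^ (2 * n + 1))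

lemma ml_npow (q : ℝ) (hq : 0 < q) (hq1 : q < 1) (n : ℕ) : 0 < 1 - q ^ (n + 1) := by
  have := pow_lt_one₀ hq.le hq1 (Nat.succ_ne_zero n)
  simpa using this

lemma mlU_pos (q : ℝ) (hq : 0 < q) (hq1 : q < 1) (n : ℕ) : 0 < mlU q n := by
  unfold mlU
  refine Finset.prod_pos fun i _ => ?_
  have := ml_npow q hq hq1 (2 * i)
  have := ml_npow q hq hq1 (2 * i + 1)
  positivity

lemma mlV_pos (q : ℝ) (hq : 0 < q) (hq1 : q < 1) (n : ℕ) : 0 < mlV q n :=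
  div_pos (mlU_pos q hq hq1 n) (ml_npow q hq hq1 _)

lemma mlU_rec (q : ℝ) (hq : 0 < q) (hq1 : q < 1) (n : ℕ) :
    mlU q (n + 1) = (q ^ 2) ^ (n + 1) * mlU q (n + 1) + (q ^ 2) ^ n * mlV q n := by
  have h1 := (ml_npow q hq hq1 (2 * n)).ne'
  have h2 := (ml_npow q hq hq1 (2 * n + 1)).ne'
  have e : mlU q (n + 1) = mlU q n *
    (q ^ (2 * n) / ((1 - q ^ (2 * n + 1)) * (1 - q ^ (2 * n + 2)))) := Finset.prod_range_succ _ _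
  rw [e, mlV, ← pow_mul, ← pow_mul, mul_add 2 n 1, mul_one]
  have e3 : q ^ (2 * n + 1 + 1) = q ^ (2 * n + 2) := rfl
  rw [e3] at h2
  generalize q ^ (2 * n + 2) = y at *
  generalize q ^ (2 * n + 1) = x at *
  field_simp
  ring

lemma mlV_rec (q : ℝ) (hq : 0 < q) (hq1 : q < 1) (n : ℕ) :
    mlV q n = q * (q ^ 2) ^ n * mlV q n + mlU q n := by
  have h1 := (ml_npow q hq hq1 (2 * n)).ne'
  have e : q * (q ^ 2) ^ n = q ^ (2 * n + 1) := by rw [← pow_mul]; ring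
  rw [mlV, e]
  generalize q ^ (2 * n + 1) = x at *
  field_simp
  ring

lemma mlA_case0 (σ q : ℝ) (hq : 0 < q) (hq1 : q < 1) (n : ℕ) :
    mlA 0 σ q n = (-1) ^ n * (mlU q n * (σ ^ 2 * (1 - q) ^ 2) ^ n) := by
  induction n with
  | zero => simpa [mlU] using mlA_zero 0 σ q hq hq1 le_rfl
  | succ n ih =>
    have e : mlU q (n + 1) = mlU q n *
      (q ^ (2 * n) / ((1 - q ^ (2 * n + 1)) * (1 - q ^ (2 * n + 2)))) := Finset.prod_range_succ _ _
    have e1 : q ^ (2 * (n:ℝ) + 0 + 1) = q ^ (2 * n + 1) := by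
      rw [← Real.rpow_natCast]; push_cast; ring_nf
    have e2 : q ^ (2 * (n:ℝ) + 0 + 2) = q ^ (2 * n + 2) := by
      rw [← Real.rpow_natCast]; push_cast; ring_nf
    rw [mlA_succ 0 σ q hq hq1 le_rfl, ih, e, mlD, e1, e2, pow_succ (-1 : ℝ),
      pow_succ (σ ^ 2 * (1 - q) ^ 2)]
    ring

lemma mlA_case1 (σ q : ℝ) (hq : 0 < q) (hq1 : q < 1) (n : ℕ) :
    mlA 1 σ q n = (-1) ^ n * ((1 - q) * (mlV q n * (σ ^ 2 * (1 - q) ^ 2) ^ n)) := by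
  induction n with
  | zero =>
    have : 1 - q ≠ 0 := by linarith
    rw [mlA_zero 1 σ q hq hq1 zero_le_one]
    simp [mlU, mlV, this]
  | succ n ih =>
    have e : mlU q (n + 1) = mlU q n *
      (q ^ (2 * n) / ((1 - q ^ (2 * n + 1)) * (1 - q ^ (2 * n + 2)))) := Finset.prod_range_succ _ _
    have e1 : q ^ (2 * (n:ℝ) + 1 + 1) = q ^ (2 * n + 2) := by
      rw [← Real.rpow_natCast]; push_cast; ring_nf
    have e2 : q ^ (2 * (n:ℝ) + 1 + 2) = q ^ (2 * (n + 1) + 1) := by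
      rw [← Real.rpow_natCast]; push_cast; ring_nf
    rw [mlA_succ 1 σ q hq hq1 zero_le_one, ih, mlV, mlV, e, mlD, e1, e2, pow_succ (-1 : ℝ),
      pow_succ (σ ^ 2 * (1 - q) ^ 2)]
    generalize q ^ (2 * (n + 1) + 1) = x
    generalize q ^ (2 * n + 2) = y
    generalize q ^ (2 * n + 1) = z
    rw [mul_pow]
    simp only [div_eq_mul_inv, mul_inv]
    ring

lemma ml_approx (q σ γ : ℝ) (hq0 : 0 < q) (hq1 : q < 1) (hσ : 0 < σ)
    (hγ0 : 0 ≤ γ) (hR : condR q γ) :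
    ∃ P : ℕ → Polynomial ℝ,
      (∀ K, ∀ z : ℂ, Polynomial.aeval z (P K) = 0 → ∃ x : ℝ, 0 < x ∧ z = x) ∧
      (∀ K n, |(P K).coeff n| ≤ |mlA γ σ q n|) ∧
      (∀ n, Tendsto (fun K => (P K).coeff n) atTop (𝓝 (mlA γ σ q n))) := by
  have hκ : 0 < σ ^ 2 * (1 - q) ^ 2 := by
    have : 0 < 1 - q := by linarith
    positivity
  obtain ⟨hu, hv, hul, hvl⟩ := qtrig_coeff q hq0 hq1 (mlU q) (mlV q) (by simp [mlU])
    (fun n => (mlU_pos q hq0 hq1 n).le) (fun n => (mlV_pos q hq0 hq1 n).le)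
    (mlU_rec q hq0 hq1) (mlV_rec q hq0 hq1)
  rcases hR with (rfl | rfl) | ⟨_, _, hc⟩
  · refine ⟨fun K => (qtrig q (K + 1)).1.comp
      (Polynomial.C (σ ^ 2 * (1 - q) ^ 2) * Polynomial.X), ?_, ?_, ?_⟩
    · intro K z hz
      exact qtrig_roots_pos q hq0 K _ hκ _ (Or.inl rfl) z hz
    · intro K n
      rw [mlA_case0 σ q hq0 hq1, Polynomial.comp_C_mul_X_coeff]
      simp only [abs_mul, abs_pow, abs_neg, abs_one, one_pow, one_mul]
      rw [abs_of_pos (mlU_pos q hq0 hq1 n)]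
      gcongr
      exact hu _ _
    · intro n
      rw [mlA_case0 σ q hq0 hq1, ← mul_assoc]
      simp only [Polynomial.comp_C_mul_X_coeff]
      exact ((hul n).comp (tendsto_add_atTop_nat 1)).mul_const _
  · refine ⟨fun K => Polynomial.C (1 - q) * (qtrig q (K + 1)).2.comp
      (Polynomial.C (σ ^ 2 * (1 - q) ^ 2) * Polynomial.X), ?_, ?_, ?_⟩
    · intro K z hz
      refine qtrig_roots_pos q hq0 K _ hκ _ (Or.inr rfl) z ?_
      rw [map_mul] at hz
      refine (mul_eq_zero.1 hz).resolve_left ?_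
      rw [Polynomial.aeval_C]
      have : (1 - q) ≠ 0 := by linarith
      simpa using (map_ne_zero (algebraMap ℝ ℂ)).2 this
    · intro K n
      rw [mlA_case1 σ q hq0 hq1, Polynomial.coeff_C_mul, Polynomial.comp_C_mul_X_coeff]
      simp only [abs_mul, abs_pow, abs_neg, abs_one, one_pow, one_mul]
      rw [abs_of_pos (mlV_pos q hq0 hq1 n)]
      gcongr
      exact hv _ _
    · intro n
      rw [mlA_case1 σ q hq0 hq1, ← mul_assoc, mul_comm _ (1 - q), mul_assoc, ← mul_assoc ((-1) ^ n)]
      simp only [Polynomial.coeff_C_mul, Polynomial.comp_C_mul_X_coeff]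
      exact (((hvl n).comp (tendsto_add_atTop_nat 1)).mul_const _).const_mul _
  · have hhalf : q < 1 / 2 := by
      have a1 := Real.rpow_lt_one hq0.le hq1 (show 0 < γ + 1 by linarith)
      have a2 := Real.rpow_lt_one hq0.le hq1 (show 0 < γ + 2 by linarith)
      have b1 := Real.rpow_pos_of_pos hq0 (γ + 1)
      have b2 := Real.rpow_pos_of_pos hq0 (γ + 2)
      have c1 : (1 - q ^ (γ + 1)) * (1 - q ^ (γ + 2)) < 1 := by nlinarith
      have c2 : 0 < q⁻¹ * (1 - q) := mul_pos (inv_pos.2 hq0) (by linarith)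
      have c3 : 1 < q⁻¹ * (1 - q) := by
        rw [mul_assoc] at hc
        nlinarith
      rw [inv_mul_eq_div, lt_div_iff₀ hq0] at c3
      linarith
    have hD := mlD_pos γ σ q hq0 hq1 hσ hγ0
    have key : ∀ N n, (∑ n ∈ Finset.range (N + 1), Polynomial.monomial n
        ((-1) ^ n * ∏ i ∈ Finset.range n, mlD γ σ q i) : Polynomial ℝ).coeff n =
        if n < N + 1 then mlA γ σ q n else 0 := by
      intro N n
      rw [Polynomial.finsetSum_coeff]
      simp only [Polynomial.coeff_monomial, Finset.sum_ite_eq', Finset.mem_range,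
        mlA_prod γ σ q hq0 hq1 hγ0]
    refine ⟨fun N => ∑ n ∈ Finset.range (N + 1), Polynomial.monomial n
        ((-1) ^ n * ∏ i ∈ Finset.range n, mlD γ σ q i), ?_, ?_, ?_⟩
    · intro N
      refine hutch_roots _ hD ?_ N
      intro n
      have := mlD_succ γ σ q hq0 hq1 hσ hγ0 n
      have h4 : q ^ 2 < 1 / 4 := by nlinarith
      nlinarith [hD n]
    · intro N n
      rw [key]
      split_ifs
      · rfl
      · simp
    · intro n
      refine tendsto_const_nhds.congr' ?_
      filter_upwards [eventually_ge_atTop n] with N hN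
      rw [key, if_pos (by omega)]

lemma stmt15_aux (q σ γ : ℝ) (hq0 : 0 < q) (hq1 : q < 1) (hσ : 0 < σ)
    (hγ0 : 0 ≤ γ) (hR : condR q γ)
    (α : ℝ) (hα0 : 0 ≤ α) (hα1 : α < 1)
    (ς1 : ℝ)
    (hς1 : IsLeast {x : ℝ | 0 < x ∧ deriv (hMLR γ σ q) x = 0} ς1) :
    ∃ r₃ : ℝ,
      (r₃ ∈ Set.Ioo 0 ς1 ∧
        1 + r₃ * deriv (deriv (hMLR γ σ q)) r₃ / deriv (hMLR γ σ q) r₃ = α) ∧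
      (∀ r : ℝ, r ∈ Set.Ioo 0 ς1 →
        1 + r * deriv (deriv (hMLR γ σ q)) r / deriv (hMLR γ σ q) r = α → r = r₃) ∧
      radiusConvex α (hML γ σ q) = r₃ := by
  obtain ⟨P, h1, h2, h3⟩ := ml_approx q σ γ hq0 hq1 hσ hγ0 hR
  have a0 := mlA_zero γ σ q hq0 hq1 hγ0
  refine absB (mlA γ σ q) P a0 ?_ h1 h2 h3 (mlA_summable γ σ q hq0 hq1 hσ hγ0)
    (hMLR γ σ q) ?_ (hML γ σ q) ?_ α hα0 hα1 ς1 hς1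
  · have := mlA_succ γ σ q hq0 hq1 hγ0 0
    rw [zero_add] at this
    rw [this, a0]
    linarith [mlD_pos γ σ q hq0 hq1 hσ hγ0 0]
  · ext x
    unfold hMLR mlA
    rw [mul_assoc, ← tsum_mul_left]
    simp only [mul_assoc]
  · ext x
    unfold hML mlA
    rw [mul_assoc, ← tsum_mul_left]
    simp only [Complex.ofReal_mul (qGamma q (γ + 1)), mul_assoc]

end Helpers

theorem stmt15 (q σ γ : ℝ) (hq0 : 0 < q) (hq1 : q < 1) (hσ : 0 < σ)
    (hγ0 : 0 ≤ γ) (hγ2 : γ < 2) (hR : condR q γ)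
    (α : ℝ) (hα0 : 0 ≤ α) (hα1 : α < 1)
    (ς1 : ℝ)
    (hς1 : IsLeast {x : ℝ | 0 < x ∧ deriv (hMLR γ σ q) x = 0} ς1) :
    ∃ r₃ : ℝ,
      (r₃ ∈ Set.Ioo 0 ς1 ∧
        1 + r₃ * deriv (deriv (hMLR γ σ q)) r₃ / deriv (hMLR γ σ q) r₃ = α) ∧
      (∀ r : ℝ, r ∈ Set.Ioo 0 ς1 →
        1 + r * deriv (deriv (hMLR γ σ q)) r / deriv (hMLR γ σ q) r = α → r = r₃) ∧
      radiusConvex α (hML γ σ q) = r₃ := by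
  exact stmt15_aux q σ γ hq0 hq1 hσ hγ0 hR α hα0 hα1 ς1 hς1
end

section
/- Assume condition (R). Then the radius of convexity r^c(g_{γ,σ}(·;q)) = r^c_0(g_{γ,σ}(·;q)) satisfies Γ_q(γ+3)/(9σ²Γ_q(γ+1)) < (r^c(g_{γ,σ}(·;q)))² < 9Γ_q(γ+3)Γ_q(γ+5) / ( σ²(81Γ_q(γ+1)Γ_q(γ+5) − 50q²Γ_q(γ+3)²) ). -/
lemma geo_bound (f : ℕ → ℂ) (ρ : ℝ) (h0 : 0 ≤ ρ) (h1 : ρ < 1)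
    (h : ∀ n, ‖f (n + 1)‖ ≤ ρ * ‖f n‖) :
    Summable (fun n => ‖f n‖) ∧ ‖∑' n, f n‖ ≤ ‖f 0‖ / (1 - ρ) := by
  have hb : ∀ n, ‖f n‖ ≤ ‖f 0‖ * ρ ^ n := by
    intro n
    induction n with
    | zero => simp
    | succ k ih =>
      calc ‖f (k + 1)‖ ≤ ρ * ‖f k‖ := h k
        _ ≤ ρ * (‖f 0‖ * ρ ^ k) := by gcongr
        _ = ‖f 0‖ * ρ ^ (k + 1) := by ring
  have hs := (hasSum_geometric_of_lt_one h0 h1).mul_left ‖f 0‖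
  refine ⟨Summable.of_nonneg_of_le (fun n => norm_nonneg _) hb hs.summable, ?_⟩
  rw [div_eq_mul_inv]
  exact tsum_of_norm_bounded hs hb

noncomputable def TT (c : ℕ → ℝ) (k : ℕ) (x : ℂ) (n : ℕ) : ℂ :=
  (((2 * n + 1) ^ k * c n : ℝ) : ℂ) * (-x) ^ n

structure Good (c : ℕ → ℝ) : Prop where
  pos : ∀ n, 0 < c n
  c0 : c 0 = 1
  c1 : c 1 = 1 / 9
  ratio : ∀ n, 1 ≤ n → c (n + 1) ≤ c n / 15

lemma TT_norm {c : ℕ → ℝ} (hc : Good c) (k : ℕ) (x : ℂ) (n : ℕ) :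
    ‖TT c k x n‖ = (2 * n + 1) ^ k * c n * ‖x‖ ^ n := by
  have := hc.pos n
  rw [TT, norm_mul, norm_pow, norm_neg, Complex.norm_real, Real.norm_of_nonneg (by positivity)]

lemma TT_ratio {c : ℕ → ℝ} (hc : Good c) (k : ℕ) (x : ℂ) (n : ℕ) (hn : 1 ≤ n) (B : ℝ)
    (hB : ((2 * (n : ℝ) + 3)) ^ k ≤ B * (2 * n + 1) ^ k) :
    ‖TT c k x (n + 1)‖ ≤ (B / 15 * ‖x‖) * ‖TT c k x n‖ := by
  rw [TT_norm hc, TT_norm hc]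
  have h1 := hc.ratio n hn
  have h2 := hc.pos n
  have h3 := hc.pos (n + 1)
  push_cast
  calc (2 * ((n : ℝ) + 1) + 1) ^ k * c (n + 1) * ‖x‖ ^ (n + 1)
      = (2 * (n : ℝ) + 3) ^ k * c (n + 1) * ‖x‖ ^ (n + 1) := by ring_nf
    _ ≤ (B * (2 * n + 1) ^ k) * (c n / 15) * ‖x‖ ^ (n + 1) := by
        gcongr
        exact le_trans (by positivity) hB
    _ = _ := by ring

lemma B1 (k n : ℕ) (hk : k ≤ 2) (hn : 1 ≤ n) :
    ((2 * (n : ℝ) + 3)) ^ k ≤ 3 * (2 * n + 1) ^ k := by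
  have : (1 : ℝ) ≤ n := by exact_mod_cast hn
  interval_cases k
  · norm_num
  · nlinarith
  · nlinarith

lemma B2 (k n : ℕ) (hk : k ≤ 2) (hn : 2 ≤ n) :
    ((2 * (n : ℝ) + 3)) ^ k ≤ 2 * (2 * n + 1) ^ k := by
  have : (2 : ℝ) ≤ n := by exact_mod_cast hn
  interval_cases k
  · norm_num
  · nlinarith
  · nlinarith

lemma B3 (k n : ℕ) (hk : k ≤ 2) (hn : 3 ≤ n) :
    ((2 * (n : ℝ) + 3)) ^ k ≤ 5 / 3 * (2 * n + 1) ^ k := by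
  have : (3 : ℝ) ≤ n := by exact_mod_cast hn
  interval_cases k
  · norm_num
  · nlinarith
  · nlinarith

lemma TT_summable {c : ℕ → ℝ} (hc : Good c) (k : ℕ) (hk : k ≤ 2) (x : ℂ) (hx : ‖x‖ ≤ 4) :
    Summable (fun n => ‖TT c k x n‖) := by
  rw [← summable_nat_add_iff 1]
  refine (geo_bound (fun n => TT c k x (n + 1)) (4/5) (by norm_num) (by norm_num) ?_).1
  intro n
  refine (TT_ratio hc k x (n + 1) (by omega) 3 (B1 k _ hk (by omega))).trans ?_
  gcongr
  linarith

noncomputable def SS (c : ℕ → ℝ) (k : ℕ) (x : ℂ) : ℂ := ∑' n, TT c k x n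

lemma SS_split (c : ℕ → ℝ) (hc : Good c) (k : ℕ) (hk : k ≤ 2) (x : ℂ) (hx : ‖x‖ ≤ 4) (m : ℕ) :
    SS c k x = ∑ n ∈ Finset.range m, TT c k x n + ∑' n, TT c k x (n + m) :=
  ((TT_summable hc k hk x hx).of_norm.sum_add_tsum_nat_add m).symm

lemma c2_le {c : ℕ → ℝ} (hc : Good c) : c 2 ≤ 1 / 135 := by
  have := hc.ratio 1 le_rfl
  rw [hc.c1] at this
  norm_num at this ⊢
  exact this

lemma c3_le {c : ℕ → ℝ} (hc : Good c) : c 3 ≤ c 2 / 15 := hc.ratio 2 (by norm_num)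

/-- tail after three terms -/
lemma tail3 {c : ℕ → ℝ} (hc : Good c) (k : ℕ) (hk : k ≤ 2) (x : ℂ) (hx : ‖x‖ ≤ 1) :
    ‖∑' n, TT c k x (n + 3)‖ ≤ 7 ^ k * (c 2 / 15) * (9 / 8) := by
  have := (geo_bound (fun n => TT c k x (n + 3)) (1/9) (by norm_num) (by norm_num) (by
    intro n
    refine (TT_ratio hc k x (n + 3) (by omega) (5/3) (B3 k _ hk (by omega))).trans ?_
    gcongr
    linarith)).2
  refine this.trans ?_
  have h3 := c3_le hc
  have h3p := hc.pos 3
  simp only [zero_add]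
  rw [TT_norm hc]
  have : ‖x‖ ^ 3 ≤ 1 := pow_le_one₀ (norm_nonneg _) hx
  norm_num
  have h7 : (7 : ℝ) ^ k * c 3 * ‖x‖ ^ 3 ≤ 7 ^ k * (c 2 / 15) * 1 := by
    have := hc.pos 2
    gcongr
  linarith

lemma lower_alg (u v p : ℝ) (hp : 0 < p) (hp' : p ≤ 1 / 135) (h : u ^ 2 + v ^ 2 ≤ 1) :
    7 * p < 1 - 4 / 3 * u + (u ^ 2 + v ^ 2) / 3 +
      p * (30 * (u ^ 2 - v ^ 2) - 40 / 3 * (u ^ 2 + v ^ 2) * u) + 125 * p ^ 2 * (u ^ 2 + v ^ 2) ^ 2 := by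
  have hu : u ≤ 1 := by nlinarith
  have h1 : 0 ≤ 125 * p ^ 2 * (u ^ 2 + v ^ 2) ^ 2 := by positivity
  have h2 : p * v ^ 2 ≤ 1 / 135 * v ^ 2 := by gcongr
  have hw : 0 ≤ u ^ 2 + v ^ 2 := by positivity
  rcases le_or_gt u 0 with h0 | h0
  · have : p * ((u ^ 2 + v ^ 2) * u) ≤ 0 := by
      apply mul_nonpos_of_nonneg_of_nonpos hp.le
      exact mul_nonpos_of_nonneg_of_nonpos hw h0
    nlinarith [mul_nonneg hp.le (sq_nonneg u), sq_nonneg v, sq_nonneg u]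
  · have h3 : p * ((u ^ 2 + v ^ 2) * u) ≤ p * u := by
      gcongr
      nlinarith
    have h4 : p * (7 + 40 / 3 * u - 30 * u ^ 2) < 2 / 3 * (1 - u) := by
      have h5 : p * (1 - u) ≤ 1 / 135 * (1 - u) := by gcongr
      rcases le_or_gt u (9/10) with h6 | h6
      · nlinarith [mul_nonneg hp.le (sq_nonneg u), mul_nonneg hp.le (sub_nonneg.2 hu), mul_nonneg hp.le h0.le,
          mul_nonneg hp.le (sq_nonneg (u - 2/9))]
      · have : 7 + 40 / 3 * u - 30 * u ^ 2 < 0 := by nlinarith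
        have := mul_neg_of_pos_of_neg hp this
        linarith
    nlinarith [sq_nonneg v, sq_nonneg (1 - u)]

lemma re_prod_bound (a b : ℂ) (A B : ℝ) (ha : ‖a‖ ≤ A) (hb : ‖b‖ ≤ B) :
    -(A * B) ≤ (a * (starRingEnd ℂ) b).re := by
  have h1 : |(a * (starRingEnd ℂ) b).re| ≤ ‖a * (starRingEnd ℂ) b‖ := Complex.abs_re_le_norm _
  rw [norm_mul, RCLike.norm_conj] at h1
  have h2 : ‖a‖ * ‖b‖ ≤ A * B :=
    mul_le_mul ha hb (norm_nonneg _) (le_trans (norm_nonneg _) ha)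
  linarith [neg_abs_le (a * (starRingEnd ℂ) b).re]

lemma lower_pos {c : ℕ → ℝ} (hc : Good c) (x : ℂ) (hx : ‖x‖ ≤ 1) :
    SS c 1 x ≠ 0 ∧ 0 < (SS c 2 x / SS c 1 x).re := by
  have hp := hc.pos 2
  have hp' := c2_le hc
  set p := c 2 with hpd
  obtain ⟨E, hE⟩ : ∃ E, E = ∑' n, TT c 2 x (n + 3) := ⟨_, rfl⟩
  obtain ⟨F, hF⟩ : ∃ F, F = ∑' n, TT c 1 x (n + 3) := ⟨_, rfl⟩
  have hEb := tail3 hc 2 le_rfl x hx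
  have hFb := tail3 hc 1 (by norm_num) x hx
  have h2 := SS_split c hc 2 le_rfl x (by linarith) 3
  have h1 := SS_split c hc 1 (by norm_num) x (by linarith) 3
  rw [← hE] at hEb h2
  rw [← hF] at hFb h1
  rw [← hpd] at hEb hFb
  simp only [Finset.sum_range_succ, Finset.sum_range_zero, TT, hc.c0, hc.c1, ← hpd] at h1 h2
  norm_num at h1 h2 hEb hFb
  set P : ℂ := 1 - x + 25 * p * x ^ 2 with hP
  set Q : ℂ := 1 - x / 3 + 5 * p * x ^ 2 with hQ
  have h2' : SS c 2 x = P + E := by rw [h2, hP]; ring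
  have h1' : SS c 1 x = Q + F := by rw [h1, hQ]; ring
  have hx2 : ‖x‖ ^ 2 ≤ 1 := pow_le_one₀ (norm_nonneg _) hx
  have nP : ‖P‖ ≤ 219 / 100 := by
    calc ‖P‖ ≤ ‖(1 : ℂ)‖ + ‖x‖ + ‖25 * (p : ℂ) * x ^ 2‖ :=
          (norm_add_le _ _).trans (by gcongr; exact norm_sub_le _ _)
      _ = 1 + ‖x‖ + 25 * p * ‖x‖ ^ 2 := by
          simp [abs_of_pos hp]
      _ ≤ 1 + 1 + 25 * (1 / 135) * 1 := by gcongr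
      _ ≤ _ := by norm_num
  have nQ : ‖Q‖ ≤ 138 / 100 := by
    calc ‖Q‖ ≤ ‖(1 : ℂ)‖ + ‖x / 3‖ + ‖5 * (p : ℂ) * x ^ 2‖ :=
          (norm_add_le _ _).trans (by gcongr; exact norm_sub_le _ _)
      _ = 1 + ‖x‖ / 3 + 5 * p * ‖x‖ ^ 2 := by
          simp [abs_of_pos hp]
      _ ≤ 1 + 1 / 3 + 5 * (1 / 135) * 1 := by gcongr
      _ ≤ _ := by norm_num
  have hmain : 0 < (SS c 2 x * (starRingEnd ℂ) (SS c 1 x)).re := by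
    have hexp : (SS c 2 x * (starRingEnd ℂ) (SS c 1 x)).re = (P * (starRingEnd ℂ) Q).re +
        (E * (starRingEnd ℂ) Q).re + (P * (starRingEnd ℂ) F).re + (E * (starRingEnd ℂ) F).re := by
      rw [h2', h1', map_add, ← Complex.add_re, ← Complex.add_re, ← Complex.add_re]
      congr 1
      ring
    rw [hexp]
    have e1 := re_prod_bound E Q _ _ hEb nQ
    have e2 := re_prod_bound P F _ _ nP hFb
    have e3 := re_prod_bound E F _ _ hEb hFb
    have hn : x.re ^ 2 + x.im ^ 2 ≤ 1 := by
      have := Complex.sq_norm x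
      rw [Complex.normSq_apply] at this
      nlinarith
    have key := lower_alg x.re x.im p hp hp' hn
    have e4 : (P * (starRingEnd ℂ) Q).re = 1 - 4 / 3 * x.re + (x.re ^ 2 + x.im ^ 2) / 3 +
      p * (30 * (x.re ^ 2 - x.im ^ 2) - 40 / 3 * (x.re ^ 2 + x.im ^ 2) * x.re)
        + 125 * p ^ 2 * (x.re ^ 2 + x.im ^ 2) ^ 2 := by
      have hx3 : x / 3 = ((1 / 3 : ℝ) : ℂ) * x := by push_cast; ring
      rw [hP, hQ, hx3]
      simp [pow_two]
      ring
    have hpp : p * p ≤ 1 / 135 * p := by gcongr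
    nlinarith
  have hne : SS c 1 x ≠ 0 := by
    intro h
    rw [h] at hmain
    simp at hmain
  refine ⟨hne, ?_⟩
  have : SS c 2 x / SS c 1 x = (SS c 2 x * (starRingEnd ℂ) (SS c 1 x)) / ((Complex.normSq (SS c 1 x) : ℝ) : ℂ) := by
    rw [← Complex.mul_conj, mul_div_mul_right _ _ (by simpa using hne)]
  rw [this, Complex.div_ofReal_re]
  exact div_pos hmain (Complex.normSq_pos.2 hne)

lemma ofReal_re_tail (f : ℕ → ℂ) (ρ : ℝ) (h0 : 0 ≤ ρ) (h1 : ρ ≤ 1 / 2)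
    (h : ∀ n, ‖f (n + 1)‖ ≤ ρ * ‖f n‖) (hf : (f 0).re = - ‖f 0‖) : (∑' n, f n).re ≤ 0 := by
  have hs := (geo_bound f ρ h0 (by linarith) h).1.of_norm
  have h2 := (geo_bound (fun n => f (n + 1)) ρ h0 (by linarith) (fun n => h (n + 1))).2
  rw [hs.tsum_eq_zero_add, Complex.add_re, hf]
  have h3 := (Complex.re_le_norm _).trans h2
  have h4 : ‖f (0 + 1)‖ / (1 - ρ) ≤ ‖f 0‖ := by
    rw [div_le_iff₀ (by linarith)]
    have := h 0
    nlinarith [norm_nonneg (f 0)]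
  linarith

lemma SS_im (c : ℕ → ℝ) (k : ℕ) (x : ℝ) : ∃ y : ℝ, SS c k x = y := by
  refine ⟨∑' n : ℕ, ((2 * n + 1) ^ k * c n) * (-x) ^ n, ?_⟩
  rw [SS, Complex.ofReal_tsum]
  congr 1
  ext n
  simp [TT]

lemma upper_neg {c : ℕ → ℝ} (hc : Good c) (x : ℝ) (hxd : x = 1 / (1 - 50 * c 2)) :
    SS c 1 x ≠ 0 ∧ (SS c 2 x / SS c 1 x).re < 0 := by
  have hp := hc.pos 2
  have hp' := c2_le hc
  have hd : 0 < 1 - 50 * c 2 := by linarith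
  have hx1 : 0 < x := by rw [hxd]; positivity
  have hx2 : x ≤ 8 / 5 := by
    rw [hxd, div_le_iff₀ hd]; linarith
  have hn : ‖(x : ℂ)‖ = x := by rw [Complex.norm_real, Real.norm_of_nonneg hx1.le]
  obtain ⟨a, ha⟩ := SS_im c 1 x
  obtain ⟨b, hb⟩ := SS_im c 2 x
  have hS2 := SS_split c hc 2 le_rfl x (by linarith) 3
  have hS1 := SS_split c hc 1 (by norm_num) x (by linarith) 2
  have hb0 : b < 0 := by
    have ht : (∑' n, TT c 2 x (n + 3)).re ≤ 0 := by
      refine ofReal_re_tail _ (1/5) (by norm_num) (by norm_num) ?_ ?_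
      · intro n
        refine (TT_ratio hc 2 x (n + 3) (by omega) (5/3) (B3 2 _ le_rfl (by omega))).trans ?_
        gcongr
        linarith
      · rw [TT_norm hc, hn, TT]
        rw [← Complex.ofReal_neg, ← Complex.ofReal_pow, ← Complex.ofReal_mul, Complex.ofReal_re]
        push_cast
        ring
    have : b = (SS c 2 x).re := by rw [hb]; simp
    rw [this, hS2, Complex.add_re]
    have e : (∑ n ∈ Finset.range 3, TT c 2 x n).re = 1 - x + 25 * c 2 * x ^ 2 := by
      simp only [Finset.sum_range_succ, Finset.sum_range_zero, TT, hc.c0, hc.c1]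
      simp only [← Complex.ofReal_neg, ← Complex.ofReal_pow, ← Complex.ofReal_mul, ← Complex.ofReal_add,
        ← Complex.ofReal_zero, Complex.ofReal_re]
      push_cast
      ring
    rw [e]
    have : 1 - x + 25 * c 2 * x ^ 2 < 0 := by
      have hx3 : x * (1 - 50 * c 2) = 1 := by rw [hxd]; field_simp
      have h1 : 1 - x = - (50 * c 2 * x) := by linarith
      rw [h1]
      have : 0 < c 2 * x := by positivity
      nlinarith
    linarith
  have ha0 : 0 < a := by
    have ht := (geo_bound (fun n => TT c 1 x (n + 2)) (1/2) (by norm_num) (by norm_num) (by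
      intro n
      refine (TT_ratio hc 1 x (n + 2) (by omega) 2 (B2 1 _ (by norm_num) (by omega))).trans ?_
      gcongr
      linarith)).2
    simp only [zero_add] at ht
    rw [TT_norm hc, hn] at ht
    have : a = (SS c 1 x).re := by rw [ha]; simp
    rw [this, hS1, Complex.add_re]
    have e : (∑ n ∈ Finset.range 2, TT c 1 x n).re = 1 - x / 3 := by
      simp only [Finset.sum_range_succ, Finset.sum_range_zero, TT, hc.c0, hc.c1]
      simp only [← Complex.ofReal_neg, ← Complex.ofReal_pow, ← Complex.ofReal_mul, ← Complex.ofReal_add,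
        ← Complex.ofReal_zero, Complex.ofReal_re]
      push_cast
      ring
    rw [e]
    have h3 := Complex.abs_re_le_norm (∑' n, TT c 1 x (n + 2))
    have h4 := neg_abs_le (∑' n, TT c 1 x (n + 2)).re
    norm_num at ht
    have h5 : c 2 * x ^ 2 ≤ 1 / 135 * (8 / 5) ^ 2 := by gcongr
    norm_num at h5
    linarith
  rw [ha, hb]
  refine ⟨by exact_mod_cast ha0.ne', ?_⟩
  rw [← Complex.ofReal_div, Complex.ofReal_re]
  exact div_neg_of_neg_of_pos hb0 ha0

noncomputable def FF (c : ℕ → ℝ) (s : ℝ) (n : ℕ) (z : ℂ) : ℂ :=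
  ((c n * (-1) ^ n * s ^ (2 * n) : ℝ) : ℂ) * z ^ (2 * n + 1)

noncomputable def GG (c : ℕ → ℝ) (s : ℝ) (z : ℂ) : ℂ := ∑' n, FF c s n z

lemma xnorm (s : ℝ) (hs : 0 < s) (z : ℂ) (r : ℝ) (hr : 0 ≤ r) (hz : ‖z‖ ≤ r / s) :
    ‖((s : ℂ) * z) ^ 2‖ ≤ r ^ 2 := by
  rw [norm_pow, norm_mul, Complex.norm_real, Real.norm_of_nonneg hs.le]
  rw [le_div_iff₀ hs] at hz
  gcongr
  linarith

lemma d1 (c : ℕ → ℝ) (s : ℝ) (n : ℕ) (z : ℂ) :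
    deriv (FF c s n) z = TT c 1 ((s * z) ^ 2) n := by
  unfold FF TT
  simp only [deriv_const_mul_field', deriv_pow_field]
  push_cast
  rw [neg_pow ((s * z : ℂ) ^ 2), ← pow_mul, mul_pow]
  simp
  ring

lemma d2 (c : ℕ → ℝ) (s : ℝ) (n : ℕ) (z : ℂ) :
    z * deriv (fun z : ℂ => TT c 1 ((s * z) ^ 2) n) z =
      TT c 2 ((s * z) ^ 2) n - TT c 1 ((s * z) ^ 2) n := by
  have h : (fun z : ℂ => TT c 1 ((s * z) ^ 2) n) =
      fun z => (((2 * n + 1) * c n * (-1) ^ n * s ^ (2 * n) : ℝ) : ℂ) * z ^ (2 * n) := by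
    ext z
    unfold TT
    rw [neg_pow ((s * z : ℂ) ^ 2), ← pow_mul, mul_pow]
    push_cast
    ring
  rw [h]
  unfold TT
  rw [neg_pow ((s * z : ℂ) ^ 2), ← pow_mul, mul_pow]
  simp only [deriv_const_mul_field', deriv_pow_field]
  rcases n with _ | n
  · simp
  · have : 2 * (n + 1) - 1 = 2 * n + 1 := by omega
    rw [this]
    push_cast
    ring

lemma GG_diff {c : ℕ → ℝ} (hc : Good c) (s : ℝ) (hs : 0 < s) :
    DifferentiableOn ℂ (GG c s) (Metric.ball 0 (2 / s)) ∧
    (∀ z ∈ Metric.ball (0 : ℂ) (2 / s), deriv (GG c s) z = SS c 1 ((s * z) ^ 2)) ∧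
    (∀ z ∈ Metric.ball (0 : ℂ) (2 / s), z * deriv (deriv (GG c s)) z =
      SS c 2 ((s * z) ^ 2) - SS c 1 ((s * z) ^ 2)) := by
  have h4 : ‖(4 : ℂ)‖ ≤ 4 := by simp
  have hxz : ∀ z ∈ Metric.ball (0 : ℂ) (2 / s), ‖((s : ℂ) * z) ^ 2‖ ≤ 4 := by
    intro z hz
    have := xnorm s hs z 2 (by norm_num) (by simpa using (mem_ball_zero_iff.1 hz).le)
    norm_num at this ⊢
    exact this
  have hu0 : Summable (fun n => ‖TT c 0 4 n‖ * (2 / s)) := (TT_summable hc 0 (by norm_num) 4 h4).mul_right _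
  have hu1 : Summable (fun n => ‖TT c 1 4 n‖) := TT_summable hc 1 (by norm_num) 4 h4
  have hF0 : ∀ (n : ℕ) (w : ℂ), w ∈ Metric.ball (0 : ℂ) (2 / s) → ‖FF c s n w‖ ≤ ‖TT c 0 4 n‖ * (2 / s) := by
    intro n w hw
    have hp := hc.pos n
    have e : FF c s n w = TT c 0 ((s * w) ^ 2) n * w := by
      unfold FF TT
      rw [neg_pow ((s * w : ℂ) ^ 2), ← pow_mul, mul_pow]
      push_cast
      ring
    rw [e, norm_mul, TT_norm hc, TT_norm hc]
    have h1 := hxz w hw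
    have h2 := (mem_ball_zero_iff.1 hw).le
    have h3 : ‖(4 : ℂ)‖ = 4 := by simp
    rw [h3]
    gcongr
  have hF1 : ∀ (n : ℕ) (w : ℂ), w ∈ Metric.ball (0 : ℂ) (2 / s) →
      ‖TT c 1 ((s * w) ^ 2) n‖ ≤ ‖TT c 1 4 n‖ := by
    intro n w hw
    have hp := hc.pos n
    rw [TT_norm hc, TT_norm hc]
    have h1 := hxz w hw
    have h3 : ‖(4 : ℂ)‖ = 4 := by simp
    rw [h3]
    gcongr
  have hD0 : ∀ n, DifferentiableOn ℂ (FF c s n) (Metric.ball 0 (2 / s)) := by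
    intro n
    unfold FF
    fun_prop
  have hD1 : ∀ n, DifferentiableOn ℂ (fun z : ℂ => TT c 1 ((s * z) ^ 2) n) (Metric.ball 0 (2 / s)) := by
    intro n
    unfold TT
    fun_prop
  have hd : ∀ z ∈ Metric.ball (0 : ℂ) (2 / s), deriv (GG c s) z = SS c 1 ((s * z) ^ 2) := by
    intro z hz
    have := Complex.hasSum_deriv_of_summable_norm hu0 hD0 Metric.isOpen_ball hF0 hz
    simp only [d1] at this
    exact this.tsum_eq.symm
  refine ⟨Complex.differentiableOn_tsum_of_summable_norm hu0 hD0 Metric.isOpen_ball hF0, hd, ?_⟩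
  intro z hz
  have h1 : deriv (deriv (GG c s)) z = deriv (fun z : ℂ => ∑' n, TT c 1 ((s * z) ^ 2) n) z := by
    apply Filter.EventuallyEq.deriv_eq
    filter_upwards [Metric.isOpen_ball.mem_nhds hz] with w hw
    exact hd w hw
  have h2 := (Complex.hasSum_deriv_of_summable_norm hu1 hD1 Metric.isOpen_ball hF1 hz).mul_left z
  simp only [d2] at h2
  rw [h1, ← h2.tsum_eq, SS, SS]
  exact ((TT_summable hc 2 le_rfl _ (hxz z hz)).of_norm).tsum_sub
    ((TT_summable hc 1 (by norm_num) _ (hxz z hz)).of_norm)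

lemma radius_bounds {c : ℕ → ℝ} (hc : Good c) (s : ℝ) (hs : 0 < s) :
    1 / s < radiusConvex 0 (GG c s) ∧
      radiusConvex 0 (GG c s) ^ 2 < 1 / (1 - 50 * c 2) / s ^ 2 := by
  obtain ⟨hD, h1, h2⟩ := GG_diff hc s hs
  set U : Set ℂ := Metric.ball 0 (2 / s) with hU
  have hUo : IsOpen U := Metric.isOpen_ball
  have hD1 : DifferentiableOn ℂ (deriv (GG c s)) U := hD.deriv hUo
  have hD2 : DifferentiableOn ℂ (deriv (deriv (GG c s))) U := hD1.deriv hUo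
  set h : ℂ → ℝ := fun z => (1 + z * deriv (deriv (GG c s)) z / deriv (GG c s) z).re with hh
  have hval : ∀ z ∈ U, SS c 1 ((s * z) ^ 2) ≠ 0 →
      h z = (SS c 2 ((s * z) ^ 2) / SS c 1 ((s * z) ^ 2)).re := by
    intro z hz hne
    simp only [hh]
    rw [h2 z hz, h1 z hz, sub_div, div_self hne]
    congr 1
    ring
  set V : Set ℂ := {z ∈ U | deriv (GG c s) z ≠ 0} with hV
  have hVo : IsOpen V := hD1.continuousOn.isOpen_inter_preimage hUo isOpen_ne
  have hcont : ContinuousOn h V := by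
    apply Complex.continuous_re.comp_continuousOn
    apply continuousOn_const.add
    apply ContinuousOn.div
    · exact continuousOn_id.mul (hD2.continuousOn.mono (fun z hz => hz.1))
    · exact hD1.continuousOn.mono (fun z hz => hz.1)
    · exact fun z hz => hz.2
  have hp := hc.pos 2
  have hp' := c2_le hc
  have hd : 0 < 1 - 50 * c 2 := by linarith
  -- upper
  set X : ℝ := 1 / (1 - 50 * c 2) with hX
  have hX1 : 0 < X := by positivity
  have hX2 : X ≤ 8 / 5 := by
    rw [hX, div_le_iff₀ hd]; linarith
  obtain ⟨hne, hneg⟩ := upper_neg hc X hX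
  set R : ℝ := √X / s with hR
  have hR0 : 0 < R := div_pos (Real.sqrt_pos.2 hX1) hs
  have hsq : √X ^ 2 = X := Real.sq_sqrt hX1.le
  have hRx : ((s : ℂ) * (R : ℂ)) ^ 2 = (X : ℂ) := by
    have : s * R = √X := by rw [hR]; field_simp
    rw [← Complex.ofReal_mul, this, ← Complex.ofReal_pow, hsq]
  have hRU : (R : ℂ) ∈ U := by
    rw [hU, mem_ball_zero_iff, Complex.norm_real, Real.norm_of_nonneg hR0.le, hR]
    gcongr
    rw [Real.sqrt_lt' (by norm_num)]
    linarith
  have hRV : (R : ℂ) ∈ V := ⟨hRU, by rw [h1 _ hRU, hRx]; exact hne⟩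
  have hRneg : h R < 0 := by
    rw [hval _ hRU (by rw [hRx]; exact hne), hRx]
    exact hneg
  have hup : ∃ r0 : ℝ, 0 < r0 ∧ r0 < R ∧ h (r0 : ℂ) < 0 := by
    have hc1 : ContinuousAt h (R : ℂ) := hcont.continuousAt (hVo.mem_nhds hRV)
    have hc2 : ContinuousAt (fun t : ℝ => h (t : ℂ)) R :=
      ContinuousAt.comp (f := fun t : ℝ => (t : ℂ)) hc1 Complex.continuous_ofReal.continuousAt
    have ev := hc2.eventually_lt continuousAt_const hRneg
    have ev2 : ∀ᶠ t : ℝ in nhdsWithin R (Set.Iio R), h (t : ℂ) < 0 := ev.filter_mono nhdsWithin_le_nhds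
    have ev3 : ∀ᶠ t : ℝ in nhdsWithin R (Set.Iio R), t ∈ Set.Ioo 0 R := Ioo_mem_nhdsLT hR0
    obtain ⟨t, ht1, ht2⟩ := (ev2.and ev3).exists
    exact ⟨t, ht2.1, ht2.2, ht1⟩
  obtain ⟨r0, hr0, hr0R, hr0n⟩ := hup
  have hub : ∀ r ∈ {r : ℝ | 0 < r ∧ ∀ z : ℂ, ‖z‖ < r →
    0 < (1 + z * deriv (deriv (GG c s)) z / deriv (GG c s) z).re}, r ≤ r0 := by
    rintro r ⟨_, hr⟩
    by_contra hlt
    push Not at hlt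
    have := hr (r0 : ℂ) (by rw [Complex.norm_real, Real.norm_of_nonneg hr0.le]; exact hlt)
    exact absurd this (not_lt.2 hr0n.le)
  -- lower
  have hK : Metric.closedBall (0 : ℂ) (1 / s) ⊆ V ∩ h ⁻¹' (Set.Ioi 0) := by
    intro z hz
    have hz1 : ‖z‖ ≤ 1 / s := mem_closedBall_zero_iff.1 hz
    have hzU : z ∈ U := by
      rw [hU, mem_ball_zero_iff]
      refine hz1.trans_lt ?_
      gcongr
      norm_num
    have hx := xnorm s hs z 1 (by norm_num) hz1
    rw [one_pow] at hx
    obtain ⟨ha, hb⟩ := lower_pos hc _ hx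
    refine ⟨⟨hzU, by rw [h1 z hzU]; exact ha⟩, ?_⟩
    rw [Set.mem_preimage, hval z hzU ha]
    exact hb
  obtain ⟨δ, hδ, hsub⟩ := (isCompact_closedBall (0 : ℂ) (1 / s)).exists_thickening_subset_open
    (hcont.isOpen_inter_preimage hVo (isOpen_Ioi (a := (0 : ℝ)))) hK
  rw [thickening_closedBall hδ (by positivity)] at hsub
  have hs1 : (0 : ℝ) < 1 / s := by positivity
  have hmem : δ + 1 / s ∈ {r : ℝ | 0 < r ∧ ∀ z : ℂ, ‖z‖ < r →
    0 < (1 + z * deriv (deriv (GG c s)) z / deriv (GG c s) z).re} := by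
    refine ⟨by positivity, fun z hz => ?_⟩
    exact (hsub (mem_ball_zero_iff.2 hz)).2
  have hlow : δ + 1 / s ≤ radiusConvex 0 (GG c s) := le_csSup ⟨r0, hub⟩ hmem
  have hupp : radiusConvex 0 (GG c s) ≤ r0 := csSup_le ⟨_, hmem⟩ hub
  refine ⟨by linarith, ?_⟩
  have : X / s ^ 2 = R ^ 2 := by rw [hR, div_pow, hsq]
  rw [this]
  apply pow_lt_pow_left₀ (by linarith) (by linarith) (by norm_num)

lemma poch_summable (a q : ℝ) (hq0 : 0 < q) (hq1 : q < 1) : Summable (fun k : ℕ => -(a * q ^ k)) :=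
  ((summable_geometric_of_lt_one hq0.le hq1).mul_left a).neg

lemma poch_pos (a q : ℝ) (hq0 : 0 < q) (hq1 : q < 1) (ha0 : 0 < a) (ha : a < 1) :
    0 < qPochInf a q := by
  have hpos : ∀ k : ℕ, 0 < 1 - a * q ^ k := by
    intro k
    have : q ^ k ≤ 1 := pow_le_one₀ hq0.le hq1.le
    have h2 : 0 < q ^ k := by positivity
    nlinarith
  have hl : Summable (fun k : ℕ => Real.log (1 - a * q ^ k)) := by
    simpa [sub_eq_add_neg] using Real.summable_log_one_add_of_summable (poch_summable a q hq0 hq1)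
  rw [qPochInf, ← Real.rexp_tsum_eq_tprod hpos hl]
  exact Real.exp_pos _

lemma poch_rec (a q : ℝ) (hq0 : 0 < q) (hq1 : q < 1) :
    qPochInf a q = (1 - a) * qPochInf (a * q) q := by
  have hm : Multipliable (fun k : ℕ => 1 - a * q ^ (k + 1)) := by
    have h := poch_summable (a * q) q hq0 hq1
    have := multipliable_one_add_of_summable h.norm
    refine this.congr ?_
    intro k
    ring
  rw [qPochInf, tprod_eq_zero_mul' (f := fun k : ℕ => 1 - a * q ^ k) hm, qPochInf]
  congr 1
  · simp
  · congr 1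
    ext k
    ring

lemma qG_pos (q x : ℝ) (hq0 : 0 < q) (hq1 : q < 1) (hx : 0 < x) : 0 < qGamma q x := by
  have h1 := poch_pos q q hq0 hq1 hq0 hq1
  have h2 := poch_pos (q ^ x) q hq0 hq1 (Real.rpow_pos_of_pos hq0 _) (Real.rpow_lt_one hq0.le hq1 hx)
  have h3 : 0 < (1 - q) ^ (1 - x) := Real.rpow_pos_of_pos (by linarith) _
  unfold qGamma
  positivity

lemma qG_rec (q x : ℝ) (hq0 : 0 < q) (hq1 : q < 1) (hx : 0 < x) :
    qGamma q (x + 1) * (1 - q) = (1 - q ^ x) * qGamma q x := by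
  have h2 := poch_pos (q ^ (x + 1)) q hq0 hq1 (Real.rpow_pos_of_pos hq0 _)
    (Real.rpow_lt_one hq0.le hq1 (by linarith))
  have hy : q ^ x < 1 := Real.rpow_lt_one hq0.le hq1 hx
  have hq : 0 < 1 - q := by linarith
  have e : (1 - q) ^ (1 - x) = (1 - q) ^ (1 - (x + 1)) * (1 - q) := by
    rw [← Real.rpow_add_one hq.ne']
    congr 1
    ring
  have h3 := poch_rec (q ^ x) q hq0 hq1
  rw [← Real.rpow_add_one hq0.ne'] at h3
  unfold qGamma
  rw [h3, e]
  have : 1 - q ^ x ≠ 0 := by linarith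
  field_simp

lemma ratio_alg (q y P : ℝ) (hq0 : 0 < q) (hq1 : q < 1) (hy : q ^ 3 ≤ y) (hy1 : y < 1)
    (hP0 : 0 < P) (hP : P ≤ q ^ 2) :
    P * ((1 - y) * (1 - q * y)) ≤ 3 / 5 * ((1 - P * y) * (1 - P * (q * y))) := by
  have hy0 : 0 < y := lt_of_lt_of_le (by positivity) hy
  have hq2 : q ^ 2 < 1 := by nlinarith
  have hP1 : P < 1 := by linarith
  have hqy : q * y < 1 := by nlinarith
  have hqy0 : 0 < q * y := by positivity
  have k0 : 0 ≤ 2 * q ^ 5 - 5 * q ^ 2 + 3 := by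
    have : 2 * q ^ 5 - 5 * q ^ 2 + 3 = (1 - q) ^ 2 * (2 * q ^ 3 + 4 * q ^ 2 + 6 * q + 3) := by ring
    rw [this]; positivity
  have k1 : q ^ 2 * (1 - y) ≤ 3 / 5 * (1 - q ^ 2 * y) := by
    have : q ^ 2 * q ^ 3 ≤ q ^ 2 * y := by gcongr
    nlinarith
  have k2 : P * (1 - y) ≤ 3 / 5 * (1 - P * y) := by
    have : P * (1 - 2 / 5 * y) ≤ q ^ 2 * (1 - 2 / 5 * y) := by
      gcongr
      linarith
    nlinarith
  have k3 : 1 - q * y ≤ 1 - P * (q * y) := by nlinarith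
  have k4 : 0 ≤ 1 - P * y := by nlinarith
  calc P * ((1 - y) * (1 - q * y)) = (P * (1 - y)) * (1 - q * y) := by ring
    _ ≤ (3 / 5 * (1 - P * y)) * (1 - P * (q * y)) := by
      apply mul_le_mul k2 k3 (by linarith) (by linarith)
    _ = _ := by ring

noncomputable def dd (γ σ q : ℝ) (n : ℕ) : ℝ :=
  σ ^ (2 * n) * q ^ (n * (n - 1)) * qGamma q (γ + 1) / qGamma q (2 * n + γ + 1)

lemma dd_rec (q σ γ : ℝ) (hq0 : 0 < q) (hq1 : q < 1) (hγ0 : 0 ≤ γ) (n : ℕ) :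
    dd γ σ q (n + 1) * ((1 - q ^ (2 * n) * q ^ (γ + 1)) * (1 - q ^ (2 * n) * (q * q ^ (γ + 1)))) =
      dd γ σ q n * (σ ^ 2 * q ^ (2 * n) * (1 - q) ^ 2) := by
  have h1 := qG_rec q (2 * n + γ + 1) hq0 hq1 (by positivity)
  have h2 := qG_rec q (2 * n + γ + 1 + 1) hq0 hq1 (by positivity)
  have p0 := qG_pos q (2 * n + γ + 1) hq0 hq1 (by positivity)
  have p1 := qG_pos q (2 * n + γ + 1 + 1) hq0 hq1 (by positivity)
  have p2 := qG_pos q (2 * n + γ + 1 + 1 + 1) hq0 hq1 (by positivity)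
  have e1 : q ^ (2 * (n : ℝ) + γ + 1) = q ^ (2 * n) * q ^ (γ + 1) := by
    rw [add_assoc, Real.rpow_add hq0]
    congr 1
    rw [← Real.rpow_natCast]
    push_cast
    rfl
  have e2 : q ^ (2 * (n : ℝ) + γ + 1 + 1) = q ^ (2 * n) * (q * q ^ (γ + 1)) := by
    rw [Real.rpow_add_one hq0.ne', e1]
    ring
  rw [e1] at h1
  rw [e2] at h2
  have e3 : (n + 1) * (n + 1 - 1) = n * (n - 1) + 2 * n := by
    rcases n with _ | n
    · simp
    · simp; ring
  have e4 : (2 * ((n + 1 : ℕ) : ℝ) + γ + 1) = 2 * n + γ + 1 + 1 + 1 := by push_cast; ring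
  unfold dd
  rw [e3, e4, pow_add q]
  set A := 1 - q ^ (2 * n) * q ^ (γ + 1)
  set B := 1 - q ^ (2 * n) * (q * q ^ (γ + 1))
  have h3 : qGamma q (2 * n + γ + 1 + 1 + 1) * (1 - q) ^ 2 = A * B * qGamma q (2 * n + γ + 1) := by
    calc _ = (qGamma q (2 * n + γ + 1 + 1 + 1) * (1 - q)) * (1 - q) := by ring
      _ = B * (qGamma q (2 * n + γ + 1 + 1) * (1 - q)) := by rw [h2]; ring
      _ = _ := by rw [h1]; ring
  rw [div_mul_eq_mul_div, div_mul_eq_mul_div, div_eq_div_iff p2.ne' p0.ne']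
  linear_combination (-(σ ^ (2 * n) * σ ^ 2 * q ^ (n * (n - 1)) * q ^ (2 * n) * qGamma q (γ + 1))) * h3

lemma dd_good (q σ γ : ℝ) (hq0 : 0 < q) (hq1 : q < 1) (hσ : 0 < σ) (hγ0 : 0 ≤ γ) (hγ2 : γ < 2) :
    Good (fun n => dd γ σ q n / (9 * dd γ σ q 1) ^ n) := by
  have pos : ∀ n, 0 < dd γ σ q n := by
    intro n
    have h1 := qG_pos q (2 * n + γ + 1) hq0 hq1 (by positivity)
    have h2 := qG_pos q (γ + 1) hq0 hq1 (by positivity)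
    unfold dd
    positivity
  have d0 : dd γ σ q 0 = 1 := by
    have h2 := qG_pos q (γ + 1) hq0 hq1 (by positivity)
    simp [dd, h2.ne']
  have p1 := pos 1
  refine ⟨fun n => div_pos (pos n) (by positivity), by simp [d0], by field_simp, ?_⟩
  intro n hn
  have r0 := dd_rec q σ γ hq0 hq1 hγ0 0
  have rn := dd_rec q σ γ hq0 hq1 hγ0 n
  rw [d0] at r0
  simp only [mul_zero, pow_zero, one_mul, mul_one, zero_add] at r0
  have y1 : q ^ (γ + 1) < 1 := Real.rpow_lt_one hq0.le hq1 (by linarith)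
  have y0 : q ^ 3 ≤ q ^ (γ + 1) := by
    rw [← Real.rpow_natCast]
    apply Real.rpow_le_rpow_of_exponent_ge hq0 hq1.le
    push_cast
    linarith
  have hP : q ^ (2 * n) ≤ q ^ 2 := pow_le_pow_of_le_one hq0.le hq1.le (by omega)
  have hP0 : 0 < q ^ (2 * n) := by positivity
  have hal := ratio_alg q _ _ hq0 hq1 y0 y1 hP0 hP
  set y := q ^ (γ + 1)
  set P := q ^ (2 * n)
  have hy0 : 0 < y := lt_of_lt_of_le (by positivity) y0
  have hP1 : P < 1 := by nlinarith
  have a1 : 0 < 1 - P * y := by nlinarith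
  have a2 : 0 < 1 - P * (q * y) := by nlinarith [mul_pos hP0 hy0]
  have key : dd γ σ q (n + 1) ≤ 3 / 5 * dd γ σ q 1 * dd γ σ q n := by
    have hD : 0 < (1 - P * y) * (1 - P * (q * y)) := by positivity
    rw [← mul_le_mul_iff_left₀ hD, rn]
    have : σ ^ 2 * P * (1 - q) ^ 2 = dd γ σ q 1 * (P * ((1 - y) * (1 - q * y))) := by
      linear_combination (-P) * r0
    rw [this]
    have hpn := pos n
    calc dd γ σ q n * (dd γ σ q 1 * (P * ((1 - y) * (1 - q * y))))
        ≤ dd γ σ q n * (dd γ σ q 1 * (3 / 5 * ((1 - P * y) * (1 - P * (q * y))))) := by gcongr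
      _ = _ := by ring
  show dd γ σ q (n + 1) / (9 * dd γ σ q 1) ^ (n + 1) ≤ dd γ σ q n / (9 * dd γ σ q 1) ^ n / 15
  rw [div_le_iff₀ (by positivity)]
  refine key.trans (le_of_eq ?_)
  rw [pow_succ]
  field_simp
  ring

lemma gML_eq (q σ γ s : ℝ) (hs : 0 < s) (hsq : s ^ 2 = 9 * dd γ σ q 1) :
    gML γ σ q = GG (fun n => dd γ σ q n / (9 * dd γ σ q 1) ^ n) s := by
  ext z
  rw [gML, qML, GG, ← tsum_mul_left]
  congr 1
  ext n
  unfold FF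
  rw [← hsq, pow_mul s]
  have : dd γ σ q n / (s ^ 2) ^ n * (-1) ^ n * (s ^ 2) ^ n = dd γ σ q n * (-1) ^ n := by
    field_simp
  rw [this, dd]
  push_cast
  ring

theorem stmt16 (q σ γ : ℝ) (hq0 : 0 < q) (hq1 : q < 1) (hσ : 0 < σ)
    (hγ0 : 0 ≤ γ) (hγ2 : γ < 2) (hR : condR q γ) :
    qGamma q (γ + 3) / (9 * σ ^ 2 * qGamma q (γ + 1)) <
      radiusConvex 0 (gML γ σ q) ^ 2 ∧
    radiusConvex 0 (gML γ σ q) ^ 2 <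
      9 * qGamma q (γ + 3) * qGamma q (γ + 5) /
        (σ ^ 2 * (81 * qGamma q (γ + 1) * qGamma q (γ + 5) -
          50 * q ^ 2 * qGamma q (γ + 3) ^ 2)) := by
  have g1 := qG_pos q (γ + 1) hq0 hq1 (by positivity)
  have g3 := qG_pos q (γ + 3) hq0 hq1 (by positivity)
  have g5 := qG_pos q (γ + 5) hq0 hq1 (by positivity)
  have hgood := dd_good q σ γ hq0 hq1 hσ hγ0 hγ2
  have e1 : dd γ σ q 1 = σ ^ 2 * qGamma q (γ + 1) / qGamma q (γ + 3) := by
    have : (2 * ((1 : ℕ) : ℝ) + γ + 1) = γ + 3 := by push_cast; ring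
    rw [dd, this]
    simp
  have e2 : dd γ σ q 2 = σ ^ 4 * q ^ 2 * qGamma q (γ + 1) / qGamma q (γ + 5) := by
    have : (2 * ((2 : ℕ) : ℝ) + γ + 1) = γ + 5 := by push_cast; ring
    rw [dd, this]
  have hd1 : 0 < dd γ σ q 1 := by rw [e1]; positivity
  obtain ⟨s, hs, hsq⟩ : ∃ s : ℝ, 0 < s ∧ s ^ 2 = 9 * dd γ σ q 1 :=
    ⟨√(9 * dd γ σ q 1), Real.sqrt_pos.2 (by positivity), Real.sq_sqrt (by positivity)⟩
  obtain ⟨hl, hu⟩ := radius_bounds hgood s hs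
  have hc2 := c2_le hgood
  rw [← gML_eq q σ γ s hs hsq] at hl hu
  set r := radiusConvex 0 (gML γ σ q)
  constructor
  · have h1 : (1 / s) ^ 2 < r ^ 2 := pow_lt_pow_left₀ hl (by positivity) (by norm_num)
    have h2 : (1 / s) ^ 2 = qGamma q (γ + 3) / (9 * σ ^ 2 * qGamma q (γ + 1)) := by
      rw [div_pow, hsq, e1]
      field_simp
    rwa [h2] at h1
  · refine hu.trans_eq ?_
    have hd : 0 < 1 - 50 * (dd γ σ q 2 / (9 * dd γ σ q 1) ^ 2) := by
      linarith
    have e3 : 1 - 50 * (dd γ σ q 2 / (9 * dd γ σ q 1) ^ 2) =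
        (81 * qGamma q (γ + 1) * qGamma q (γ + 5) - 50 * q ^ 2 * qGamma q (γ + 3) ^ 2) /
          (81 * qGamma q (γ + 1) * qGamma q (γ + 5)) := by
      rw [e1, e2]
      field_simp
      ring
    show 1 / (1 - 50 * (dd γ σ q 2 / (9 * dd γ σ q 1) ^ 2)) / s ^ 2 = _
    rw [e3] at hd ⊢
    have hden : 0 < 81 * qGamma q (γ + 1) * qGamma q (γ + 5) - 50 * q ^ 2 * qGamma q (γ + 3) ^ 2 := by
      by_contra hcon
      push Not at hcon
      exact absurd hd (not_lt.2 (div_nonpos_of_nonpos_of_nonneg hcon (by positivity)))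
    rw [hsq, e1]
    set W := 81 * qGamma q (γ + 1) * qGamma q (γ + 5) - 50 * q ^ 2 * qGamma q (γ + 3) ^ 2
    field_simp
    norm_num
end
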